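/- arXiv:1007.1683 — 2 statements merged into one kernel-verified Lean document; each statement's English description precedes it below -/
import Mathlib

section
/- For every coset λ_P ∈ Q^∨/Q_P^∨ there exists a unique λ_B ∈ Q^∨ such that λ_P = λ_B + Q_P^∨ and ⟨α, λ_B⟩ ∈ {0, −1} for all α ∈ R_P^+ (Peterson–Woodward lifting). -/
/-!
The Weyl group is finite, so the root lattice carries a positive definite invariant form `B`
(the sum of the translates of the dot product). With `d_j = B(α_j, α_j)`, `D = ∏ d_j` and
`e_j = ∏_{k ≠ j} d_k`, the coroot lattice embeds in the root lattice by `(E ν)_j = e_j ν_j`, and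
`D ⟨x, ν⟩ = 2 B(x, E ν)`; a coroot `γ^∨` goes to `D γ / B(γ, γ)`. Write `N ν = B(E ν, E ν)`; then
`B(γ, γ) (N (μ + k γ^∨) - N μ) = D² (k ⟨γ, μ⟩ + k²)`.

*Existence.* In the coset choose `μ` with `N μ` minimal, and among these with `∑ μ_i` minimal.
Adding `γ^∨` shows `⟨γ, μ⟩ ≥ -1` for every root `γ` of `R_P`. A simple reflection with
`⟨α_i, μ⟩ > 0` would keep `N` and lower `∑ μ_i`; hence `⟨α_i, μ⟩ ≤ 0` for `i ∈ P`, and so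
`⟨γ, μ⟩ ≤ 0` for positive `γ` in `R_P`.

*Uniqueness.* The difference `ν ∈ Q_P^∨` of two solutions satisfies `|⟨γ, ν⟩| ≤ 1` on `R_P`. If
`ν ≠ 0`, positivity of `B` gives `i` with `ν_i ⟨α_i, ν⟩ > 0`, so that `s_i ν` has the same property
and a smaller `∑ |ν_j|`. By induction `s_i ν = 0`, hence `ν = 0`.
-/

open scoped BigOperators

/-- A reduced crystallographic root system with a fixed base `α_1, …, α_n` of simple
roots, bundled with its Weyl group `W`.  A root `γ` is recorded by its integer
coordinate vector in the basis of simple roots (so the `i`-th simple root is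
`Pi.single i 1`), and `cor γ` is the coordinate vector of the coroot `γ^∨` in the
basis of simple coroots (hence `cor γ i = ⟨χ_i, γ^∨⟩` for the fundamental weights
`χ_i`).  `A i j = ⟨α_i, α_j^∨⟩` is the Cartan matrix, `σ γ` is the reflection `s_γ`
and `act` is the action of the Weyl group on the root lattice. -/
structure RootSystemData (n : ℕ) where
  A : Fin n → Fin n → ℤ
  R : Finset (Fin n → ℤ)
  cor : (Fin n → ℤ) → (Fin n → ℤ)
  W : Type
  [grp : Group W]
  σ : (Fin n → ℤ) → W
  act : W → (Fin n → ℤ) → (Fin n → ℤ)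
  simple_mem : ∀ i : Fin n, (Pi.single i 1 : Fin n → ℤ) ∈ R
  root_ne_zero : ∀ γ ∈ R, γ ≠ 0
  neg_mem : ∀ γ ∈ R, -γ ∈ R
  pos_or_neg : ∀ γ ∈ R, (∀ i, 0 ≤ γ i) ∨ (∀ i, γ i ≤ 0)
  reduced : ∀ γ ∈ R, ∀ k : ℤ, k • γ ∈ R → k = 1 ∨ k = -1
  cor_simple : ∀ i : Fin n, cor (Pi.single i 1) = Pi.single i 1
  cor_neg : ∀ γ ∈ R, cor (-γ) = -(cor γ)
  pair_self : ∀ γ ∈ R, (∑ i, ∑ j, γ i * A i j * cor γ j) = 2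
  act_one : ∀ x, act 1 x = x
  act_mul : ∀ w w' x, act (w * w') x = act w (act w' x)
  act_refl : ∀ γ ∈ R, ∀ x, act (σ γ) x = x - (∑ i, ∑ j, x i * A i j * cor γ j) • γ
  act_mem : ∀ (w : W), ∀ γ ∈ R, act w γ ∈ R
  cor_refl : ∀ γ ∈ R, ∀ β ∈ R,
    cor (act (σ γ) β) = cor β - (∑ i, ∑ j, γ i * A i j * cor β j) • cor γ
  refl_sq : ∀ γ ∈ R, σ γ * σ γ = 1
  refl_act : ∀ (w : W), ∀ γ ∈ R, σ (act w γ) = w * σ γ * w⁻¹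
  act_faithful : ∀ w w' : W, (∀ γ ∈ R, act w γ = act w' γ) → w = w'
  generated : ∀ w : W, ∃ l : List (Fin n), w = (l.map fun i => σ (Pi.single i 1)).prod

namespace RootSystemData

instance {n : ℕ} (c : RootSystemData n) : Group c.W := c.grp

/-- the pairing `⟨x, λ⟩` between an element `x` of the root lattice (coordinates in
the basis of simple roots) and an element `λ` of the coroot lattice (coordinates in
the basis of simple coroots) -/
def pair {n : ℕ} (c : RootSystemData n) (x lam : Fin n → ℤ) : ℤ :=
  ∑ i, ∑ j, x i * c.A i j * lam j

/-- the `i`-th simple root -/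
def sroot {n : ℕ} (_c : RootSystemData n) (i : Fin n) : Fin n → ℤ := Pi.single i 1

/-- the simple reflection `s_i` -/
def s {n : ℕ} (c : RootSystemData n) (i : Fin n) : c.W := c.σ (c.sroot i)

/-- `s_{α_{t+1}}` for a `0`-based natural number index `t` (`= 1` when out of range) -/
def sN {n : ℕ} (c : RootSystemData n) (t : ℕ) : c.W := if h : t < n then c.s ⟨t, h⟩ else 1

/-- `⟨2ρ, λ⟩ = Σ_{β ∈ R^+} ⟨β, λ⟩`, where `ρ` is the half-sum of the positive roots -/
def pairTwoRho {n : ℕ} (c : RootSystemData n) (lam : Fin n → ℤ) : ℤ :=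
  ∑ β ∈ c.R, if ∀ i, 0 ≤ β i then c.pair β lam else 0

/-- the length of `w ∈ W` with respect to the simple reflections -/
noncomputable def len {n : ℕ} (c : RootSystemData n) (w : c.W) : ℕ :=
  sInf {k | ∃ l : List (Fin n), l.length = k ∧ (l.map c.s).prod = w}

/-- the parabolic subgroup `W_S` generated by the simple reflections indexed by `S` -/
def Wsub {n : ℕ} (c : RootSystemData n) (S : Finset (Fin n)) : Subgroup c.W :=
  Subgroup.closure (c.s '' ↑S)

/-- `w ∈ W_T^S`: `w ∈ W_T` and `w` has minimal length in the coset `w W_S` -/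
def MinRep {n : ℕ} (c : RootSystemData n) (T S : Finset (Fin n)) (w : c.W) : Prop :=
  w ∈ c.Wsub T ∧ ∀ u ∈ c.Wsub S, c.len w ≤ c.len (w * u)

/-- `w` is the longest element of `W_S` -/
def IsLongest {n : ℕ} (c : RootSystemData n) (S : Finset (Fin n)) (w : c.W) : Prop :=
  w ∈ c.Wsub S ∧ ∀ v ∈ c.Wsub S, c.len v ≤ c.len w

end RootSystemData

/-- the support of `γ` is contained in `S`, i.e. `γ` lies in the span of
`{α_i : i ∈ S}` (for a root `γ`, membership in `R_S`) -/
def suppIn {n : ℕ} (S : Finset (Fin n)) (γ : Fin n → ℤ) : Prop :=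
  ∀ i, i ∉ S → γ i = 0

/-- `Δ_j` for `0 ≤ j ≤ r+1`: the index set of the first `j` simple roots for `j ≤ r`,
and all of `Δ` for `j = r+1`.  (Indices of simple roots are `0`-based, so
`α_1, …, α_j` correspond to the indices `0, …, j-1`.) -/
def deltaSet (n r j : ℕ) : Finset (Fin n) :=
  if j = r + 1 then Finset.univ else Finset.univ.filter fun i => (i : ℕ) < j

namespace RootSystemData

/-- `v 0, …, v r` (standing for `v_1, …, v_{r+1}`) is the decomposition of `w`
associated to `(Δ_P, Υ)`:  each `v_i ∈ W_{Δ_i}^{Δ_{i-1}}` and `w = v_{r+1} v_r ⋯ v_1`. -/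
def IsDecomp {n : ℕ} (c : RootSystemData n) (r : ℕ) (w : c.W)
    (v : Fin (r + 1) → c.W) : Prop :=
  (∀ k : Fin (r + 1), c.MinRep (deltaSet n r ((k : ℕ) + 1)) (deltaSet n r (k : ℕ)) (v k)) ∧
    w = (List.ofFn v).reverse.prod

/-- the first `m` simple roots `α_1, …, α_m` form a path of type `A_m`:
`⟨α_i, α_j^∨⟩ = -1` if `|i-j| = 1` and `⟨α_i, α_j^∨⟩ = 0` if `|i-j| ≥ 2`. -/
def PathA {n : ℕ} (c : RootSystemData n) (m : ℕ) : Prop :=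
  ∀ i j : Fin n, (i : ℕ) < m → (j : ℕ) < m →
    (((i : ℕ) + 1 = (j : ℕ) ∨ (j : ℕ) + 1 = (i : ℕ)) → c.A i j = -1) ∧
    ((i : ℕ) + 2 ≤ (j : ℕ) ∨ (j : ℕ) + 2 ≤ (i : ℕ) → c.A i j = 0)

/-- `u_{[k,m]} = s_k s_{k+1} ⋯ s_m` (`1`-based indices; `u_{[k,m]} = 1` for `k > m`) -/
def uu {n : ℕ} (c : RootSystemData n) (k m : ℕ) : c.W :=
  ((List.range' k (m + 1 - k)).map fun t => c.sN (t - 1)).prod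

/-- `u_i^{(m)} = s_{m-i+1} s_{m-i+2} ⋯ s_m` -/
def uElt {n : ℕ} (c : RootSystemData n) (i m : ℕ) : c.W := c.uu (m - i + 1) m

end RootSystemData

/-- strict lexicographic order on `Fin m → ℤ` -/
def lexLT {m : ℕ} (x y : Fin m → ℤ) : Prop :=
  ∃ j, x j < y j ∧ ∀ k, k < j → x k = y k

/-- lexicographic order on `Fin m → ℤ` -/
def lexLE {m : ℕ} (x y : Fin m → ℤ) : Prop := x = y ∨ lexLT x y

/-- the grading `gr(q_{α_{j+1}^∨}) ∈ ℤ^{r+1}` (for the `0`-based index `j < r`), when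
`Δ_P` is of type `A_r`: in `1`-based terms, `gr(q_{α_1^∨}) = 2·e_1` and
`gr(q_{α_j^∨}) = (1-j)·e_{j-1} + (1+j)·e_j` for `2 ≤ j ≤ r`. -/
def grQ (r j : ℕ) : Fin (r + 1) → ℤ := fun k =>
  (if (k : ℕ) = j then (j : ℤ) + 2 else 0) + (if (k : ℕ) + 1 = j then -(j : ℤ) else 0)

/-- the grading `gr(q_λ)` for `λ ∈ Q_P^∨` (coordinates in simple coroots), extended
additively from the `gr(q_{α_j^∨})`, when `Δ_P` is of type `A_r` -/
def grQlam (n r : ℕ) (lam : Fin n → ℤ) : Fin (r + 1) → ℤ :=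
  fun k => ∑ j, lam j * grQ r (j : ℕ) k

namespace RootSystemData

variable {n : ℕ} (c : RootSystemData n)

/-! ### The pairing -/

lemma pair_add_left (x y v : Fin n → ℤ) : c.pair (x + y) v = c.pair x v + c.pair y v := by
  simp [pair, add_mul, Finset.sum_add_distrib]

lemma pair_smul_left (k : ℤ) (x v : Fin n → ℤ) : c.pair (k • x) v = k * c.pair x v := by
  simp [pair, Finset.mul_sum, mul_assoc]

lemma pair_add_right (x u v : Fin n → ℤ) : c.pair x (u + v) = c.pair x u + c.pair x v := by
  simp [pair, mul_add, Finset.sum_add_distrib]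

lemma pair_smul_right (k : ℤ) (x v : Fin n → ℤ) : c.pair x (k • v) = k * c.pair x v := by
  simp only [pair, Finset.mul_sum, Pi.smul_apply, smul_eq_mul]
  refine Finset.sum_congr rfl fun i _ => Finset.sum_congr rfl fun j _ => ?_
  ring

lemma pair_sub_left (x y v : Fin n → ℤ) : c.pair (x - y) v = c.pair x v - c.pair y v := by
  have := c.pair_add_left (x - y) y v
  rw [sub_add_cancel] at this
  linarith

lemma pair_sub_right (x u v : Fin n → ℤ) : c.pair x (u - v) = c.pair x u - c.pair x v := by
  have := c.pair_add_right x (u - v) v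
  rw [sub_add_cancel] at this
  linarith

lemma pair_eq_sum (x v : Fin n → ℤ) :
    c.pair x v = ∑ i, x i * c.pair (Pi.single i 1) v := by
  simp [pair, Pi.single_apply, Finset.mul_sum, mul_assoc]

lemma pair_eq_sum_right (x v : Fin n → ℤ) :
    c.pair x v = ∑ j, v j * c.pair x (Pi.single j 1) := by
  simp only [pair, Pi.single_apply, Finset.mul_sum]
  rw [Finset.sum_comm]
  refine Finset.sum_congr rfl fun i _ => Finset.sum_congr rfl fun j _ => ?_
  simp
  ring

lemma pair_simple_self (i : Fin n) : c.pair (Pi.single i 1) (Pi.single i 1) = 2 := by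
  have := c.pair_self _ (c.simple_mem i)
  rw [c.cor_simple] at this
  exact this

lemma reflection_mem {γ : Fin n → ℤ} (hγ : γ ∈ c.R) (i : Fin n) :
    γ - c.pair γ (Pi.single i 1) • Pi.single i 1 ∈ c.R := by
  have h := c.act_mem (c.σ (Pi.single i 1)) γ hγ
  rw [c.act_refl _ (c.simple_mem i), c.cor_simple] at h
  exact h

/-! ### The invariant form -/

lemma act_linear (w : c.W) : ∀ (k : ℤ) (x y : Fin n → ℤ),
    c.act w (x + k • y) = c.act w x + k • c.act w y := by
  obtain ⟨l, rfl⟩ := c.generated w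
  induction l with
  | nil => intro k x y; simp [c.act_one]
  | cons a l ih =>
    intro k x y
    simp only [List.map_cons, List.prod_cons, c.act_mul, ih]
    simp only [c.act_refl _ (c.simple_mem a)]
    have h := c.pair_add_left (c.act (l.map fun i => c.σ (Pi.single i 1)).prod x)
      (k • c.act (l.map fun i => c.σ (Pi.single i 1)).prod y) (c.cor (Pi.single a 1))
    rw [c.pair_smul_left] at h
    unfold pair at h
    rw [h]
    module

lemma finite_W : Finite c.W := by
  refine Finite.of_injective
    (fun w : c.W => fun γ : c.R => (⟨c.act w γ, c.act_mem w γ γ.2⟩ : c.R)) ?_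
  intro w w' h
  refine c.act_faithful w w' fun γ hγ => ?_
  simpa using congrFun h ⟨γ, hγ⟩

/-- An integral positive definite Weyl-invariant form, normalised to dominate the dot product.
Invariance is recorded as the formula `⟨x, γ^∨⟩ = 2 B(x, γ) / B(γ, γ)`. -/
lemma exists_form : ∃ B : LinearMap.BilinForm ℤ (Fin n → ℤ),
    (∀ x y, B x y = B y x) ∧ (∀ x, ∑ i, x i ^ 2 ≤ B x x) ∧
    ∀ γ ∈ c.R, ∀ x, 2 * B x γ = c.pair x (c.cor γ) * B γ γ := by
  have := c.finite_W
  have := Fintype.ofFinite c.W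
  let L : c.W → (Fin n → ℤ) →ₗ[ℤ] (Fin n → ℤ) := fun w =>
    (AddMonoidHom.mk' (c.act w) fun x y => by simpa using c.act_linear w 1 x y).toIntLinearMap
  let B : LinearMap.BilinForm ℤ (Fin n → ℤ) :=
    LinearMap.mk₂ ℤ (fun x y => ∑ w, L w x ⬝ᵥ L w y)
      (by intros; simp [Finset.sum_add_distrib])
      (by intros; simp only [map_smul, smul_dotProduct, Finset.smul_sum])
      (by intros; simp [Finset.sum_add_distrib])
      (by intros; simp only [map_smul, dotProduct_smul, Finset.smul_sum])
  have hB : ∀ x y, B x y = ∑ w, c.act w x ⬝ᵥ c.act w y := fun _ _ => rfl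
  have hsymm : ∀ x y, B x y = B y x := fun x y => by
    simp only [hB]
    exact Finset.sum_congr rfl fun w _ => dotProduct_comm _ _
  refine ⟨B, hsymm, fun x => ?_, fun γ hγ x => ?_⟩
  · rw [hB]
    -- the summand of the identity element is the dot product itself
    have h := Finset.single_le_sum (f := fun w => c.act w x ⬝ᵥ c.act w x)
      (fun w _ => Finset.sum_nonneg fun i _ => mul_self_nonneg _) (Finset.mem_univ (1 : c.W))
    simpa [c.act_one, dotProduct, sq] using h
  · have hinv : B (c.act (c.σ γ) x) (c.act (c.σ γ) γ) = B x γ := by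
      rw [hB, hB, ← Equiv.sum_comp (Equiv.mulRight (c.σ γ)) fun w => c.act w x ⬝ᵥ c.act w γ]
      simp [c.act_mul]
    rw [c.act_refl γ hγ x, c.act_refl γ hγ γ, c.pair_self γ hγ] at hinv
    change B (x - c.pair x (c.cor γ) • γ) (γ - (2 : ℤ) • γ) = _ at hinv
    simp only [map_sub, map_smul, LinearMap.sub_apply, LinearMap.smul_apply, smul_eq_mul] at hinv
    linarith

/-- The data used by both halves of the argument: a positive definite form `B` on the root
lattice, a diagonal embedding `ν ↦ e * ν` of the coroot lattice into the root lattice, and the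
scale `D`, compatible with the pairing and with coroots. -/
lemma exists_embedding : ∃ (B : LinearMap.BilinForm ℤ (Fin n → ℤ)) (e : Fin n → ℤ) (D : ℤ),
    (∀ x y, B x y = B y x) ∧ (∀ x, ∑ i, x i ^ 2 ≤ B x x) ∧ (∀ i, 0 < e i) ∧ 0 < D ∧
    (∀ x v, D * c.pair x v = 2 * B x (e * v)) ∧
    ∀ γ ∈ c.R, 0 < B γ γ ∧ B γ γ • (e * c.cor γ) = D • γ := by
  obtain ⟨B, hs, hp, hr⟩ := c.exists_form
  have hpos : ∀ x, x ≠ 0 → 0 < B x x := fun x hx => by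
    obtain ⟨i, hi⟩ := Function.ne_iff.mp hx
    have h1 : 0 < x i ^ 2 := by
      have : x i ≠ 0 := hi
      positivity
    have h2 := Finset.single_le_sum (f := fun i => x i ^ 2)
      (fun j _ => sq_nonneg (x j)) (Finset.mem_univ i)
    have h2 : x i ^ 2 ≤ ∑ i, x i ^ 2 := h2
    linarith [hp x]
  let d : Fin n → ℤ := fun j => B (Pi.single j 1) (Pi.single j 1)
  have hd : ∀ j, 0 < d j := fun j => hpos _ (by simp)
  let e : Fin n → ℤ := fun j => ∏ k ∈ Finset.univ.erase j, d k
  have hed : ∀ j, d j * e j = ∏ k, d k := fun j =>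
    Finset.mul_prod_erase Finset.univ d (Finset.mem_univ j)
  have hpair : ∀ x v, (∏ k, d k) * c.pair x v = 2 * B x (e * v) := fun x v => by
    have hv : e * v = ∑ j, (e j * v j) • (Pi.single j 1 : Fin n → ℤ) := by
      ext k
      simp [Finset.sum_apply, Pi.single_apply]
    rw [hv, map_sum, c.pair_eq_sum_right, Finset.mul_sum, Finset.mul_sum]
    refine Finset.sum_congr rfl fun j _ => ?_
    have h := hr _ (c.simple_mem j) x
    rw [c.cor_simple] at h
    rw [map_smul, smul_eq_mul, ← hed j]
    change 2 * _ = _ * d j at h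
    linear_combination (-e j * v j) * h
  refine ⟨B, e, ∏ k, d k, hs, hp, fun j => Finset.prod_pos fun k _ => hd k,
    Finset.prod_pos fun k _ => hd k, hpair, fun γ hγ => ⟨hpos γ (c.root_ne_zero γ hγ), ?_⟩⟩
  -- both sides have the same `B`-product with every vector, and `B` is nondegenerate
  have key : ∀ x, B x (B γ γ • (e * c.cor γ) - (∏ k, d k) • γ) = 0 := fun x => by
    rw [map_sub, map_smul, map_smul, smul_eq_mul, smul_eq_mul]
    have h1 := hpair x (c.cor γ)
    have h2 := hr γ hγ x
    have : 2 * (B γ γ * B x (e * c.cor γ) - (∏ k, d k) * B x γ) = 0 := by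
      linear_combination (-B γ γ) * h1 - (∏ k, d k) * h2
    linarith
  by_contra hne
  exact (hpos _ (sub_ne_zero.mpr hne)).ne' (key _)

/-! ### Uniqueness -/

/-- An element of `Q_P^∨` whose pairings with all roots of `R_P` lie in `{-1, 0, 1}` is zero. -/
lemma eq_zero_of_minuscule (P : Finset (Fin n)) (ν : Fin n → ℤ) (hν : suppIn P ν)
    (hm : ∀ γ ∈ c.R, suppIn P γ → |c.pair γ ν| ≤ 1) : ν = 0 := by
  obtain ⟨B, e, D, -, hp, he, hD, hpair, -⟩ := c.exists_embedding
  induction hN : (∑ j, |ν j|).toNat using Nat.strong_induction_on generalizing ν with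
  | _ N ih =>
  subst hN
  by_contra hne
  obtain ⟨i, hi⟩ : ∃ i, 0 < ν i * c.pair (Pi.single i 1) ν := by
    by_contra! hcon
    have h1 : D * c.pair (e * ν) ν ≤ 0 := by
      refine mul_nonpos_of_nonneg_of_nonpos hD.le ?_
      rw [c.pair_eq_sum]
      refine Finset.sum_nonpos fun i _ => ?_
      rw [Pi.mul_apply, mul_assoc]
      exact mul_nonpos_of_nonneg_of_nonpos (he i).le (hcon i)
    rw [hpair] at h1
    have h2 := hp (e * ν)
    refine hne (funext fun i => ?_)
    have h3 : (e * ν) i ^ 2 ≤ ∑ i, (e * ν) i ^ 2 :=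
      Finset.single_le_sum (f := fun i => (e * ν) i ^ 2)
        (fun j _ => sq_nonneg ((e * ν) j)) (Finset.mem_univ i)
    have h4 : (e * ν) i = 0 := by
      have : (e * ν) i ^ 2 ≤ 0 := by linarith
      exact pow_eq_zero_iff (two_ne_zero) |>.mp (le_antisymm this (sq_nonneg _))
    simpa [(he i).ne'] using h4
  have hiP : i ∈ P := by
    by_contra h
    simp [hν i h] at hi
  have hsingle : suppIn P (Pi.single i 1 : Fin n → ℤ) := fun j hj => by
    rw [Pi.single_apply, if_neg]
    rintro rfl
    exact hj hiP
  set p := c.pair (Pi.single i 1) ν with hpdef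
  have hp1 : |p| ≤ 1 := hm _ (c.simple_mem i) hsingle
  have hz : ν - p • Pi.single i 1 = 0 := by
    refine ih _ ?_ (ν - p • Pi.single i 1) ?_ ?_ rfl
    · have h0 : 0 ≤ ∑ j, |(ν - p • (Pi.single i 1 : Fin n → ℤ)) j| :=
        Finset.sum_nonneg fun j _ => abs_nonneg _
      have hiabs : |ν i - p| < |ν i| := by
        rw [abs_le] at hp1
        rcases pos_and_pos_or_neg_and_neg_of_mul_pos hi with ⟨ha, hb⟩ | ⟨ha, hb⟩
        · rw [abs_of_pos ha, abs_of_nonneg (by omega)]; omega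
        · rw [abs_of_neg ha, abs_of_nonpos (by omega)]; omega
      have hlt : ∑ j, |(ν - p • (Pi.single i 1 : Fin n → ℤ)) j| < ∑ j, |ν j| := by
        refine Finset.sum_lt_sum (fun j _ => ?_) ⟨i, Finset.mem_univ i, by simpa using hiabs⟩
        by_cases hj : j = i
        · subst hj; simpa using hiabs.le
        · simp [hj]
      omega
    · intro j hj
      simp [hν j hj, hsingle j hj]
    · intro γ hγ hγP
      -- `⟨γ, s_i ν⟩ = ⟨s_i γ, ν⟩`
      have h := hm _ (c.reflection_mem hγ i) (fun j hj => by simp [hγP j hj, hsingle j hj])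
      rw [c.pair_sub_left, c.pair_smul_left, ← hpdef] at h
      rwa [c.pair_sub_right, c.pair_smul_right, mul_comm]
  have h2 : p = p * 2 := by
    conv_lhs => rw [hpdef, sub_eq_zero.mp hz]
    rw [c.pair_smul_right, c.pair_simple_self]
  have : p = 0 := by omega
  simp [this] at hi

/-! ### Existence -/

lemma exists_lift (P : Finset (Fin n)) (lam : Fin n → ℤ) :
    ∃ μ : Fin n → ℤ, (∀ i, i ∉ P → lam i = μ i) ∧
      ∀ γ ∈ c.R, (∀ i, 0 ≤ γ i) → suppIn P γ → c.pair γ μ = 0 ∨ c.pair γ μ = -1 := by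
  obtain ⟨B, e, D, hs, hp, he, hD, hpair, hcor⟩ := c.exists_embedding
  have hN0 : ∀ ν, 0 ≤ B (e * ν) (e * ν) := fun ν =>
    (Finset.sum_nonneg fun i _ => sq_nonneg _).trans (hp (e * ν))
  have hmove : ∀ γ ∈ c.R, ∀ μ : Fin n → ℤ, ∀ k : ℤ,
      B γ γ * (B (e * (μ + k • c.cor γ)) (e * (μ + k • c.cor γ)) - B (e * μ) (e * μ)) =
        D ^ 2 * (k * c.pair γ μ + k ^ 2) := by
    intro γ hγ μ k
    obtain ⟨hq, hz⟩ := hcor γ hγ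
    have hexp : e * (μ + k • c.cor γ) = e * μ + k • (e * c.cor γ) := by
      rw [mul_add, mul_smul_comm]
    have h1 : ∀ x, B γ γ * B x (e * c.cor γ) = D * B x γ := fun x => by
      have := congrArg (B x) hz
      simpa only [map_smul, smul_eq_mul] using this
    have h2 := hpair γ μ
    have h3 := h1 (e * μ)
    have h4 : B γ γ * B (e * c.cor γ) (e * c.cor γ) = D ^ 2 := by
      have h5 := h1 (e * c.cor γ)
      have h6 := h1 γ
      rw [hs (e * c.cor γ) γ] at h5
      refine mul_left_cancel₀ hq.ne' ?_
      linear_combination (B γ γ) * h5 + D * h6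
    rw [hexp]
    simp only [map_add, map_smul, LinearMap.add_apply, LinearMap.smul_apply, smul_eq_mul]
    rw [hs (e * c.cor γ) (e * μ)]
    rw [hs (e * μ) γ] at h3
    linear_combination (2 * k) * h3 + k ^ 2 * h4 - k * D * h2
  have hcorP : ∀ γ ∈ c.R, suppIn P γ → suppIn P (c.cor γ) := by
    intro γ hγ hγP j hj
    obtain ⟨hq, hz⟩ := hcor γ hγ
    have := congrFun hz j
    simpa [hγP j hj, hq.ne', (he j).ne'] using this
  -- minimise the norm in the coset
  let S : Set (Fin n → ℤ) := {ν | ∀ i, i ∉ P → lam i = ν i}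
  obtain ⟨μ₀, hμ₀S, hμ₀⟩ : ∃ μ₀ ∈ S, ∀ ν ∈ S, B (e * μ₀) (e * μ₀) ≤ B (e * ν) (e * ν) := by
    let f : (Fin n → ℤ) → ℕ := fun ν => (B (e * ν) (e * ν)).toNat
    have hne : S.Nonempty := ⟨lam, fun _ _ => rfl⟩
    refine ⟨Function.argminOn f S hne, Function.argminOn_mem f S hne, fun ν hν => ?_⟩
    have h := Function.argminOn_le f S hν
    have h1 := hN0 ν
    generalize Function.argminOn f S hne = m at h ⊢
    simp only [f] at h
    omega
  -- among the elements of minimal norm, minimise the coordinate sum, which is bounded below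
  have hbound : ∀ ν, 0 ≤ B (e * ν) (e * ν) + ∑ i, ν i := fun ν => by
    have h1 := hp (e * ν)
    have h2 : 0 ≤ ∑ i, ((e * ν) i ^ 2 + ν i) := Finset.sum_nonneg fun i _ => by
      have h3 : 1 ≤ e i := he i
      have h4 : ν i ^ 2 ≤ (e * ν) i ^ 2 := by
        rw [Pi.mul_apply, mul_pow]
        exact le_mul_of_one_le_left (sq_nonneg _) (one_le_pow₀ h3)
      have h5 : 0 ≤ ν i ^ 2 + ν i := by
        rcases le_or_gt 0 (ν i) with h | h <;> nlinarith
      linarith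
    rw [Finset.sum_add_distrib] at h2
    linarith
  let T : Set (Fin n → ℤ) := {ν | ν ∈ S ∧ B (e * ν) (e * ν) = B (e * μ₀) (e * μ₀)}
  obtain ⟨μ, ⟨hμS, hμN⟩, hμ⟩ : ∃ μ ∈ T, ∀ ν ∈ T, ∑ i, μ i ≤ ∑ i, ν i := by
    let f : (Fin n → ℤ) → ℕ := fun ν => (B (e * ν) (e * ν) + ∑ i, ν i).toNat
    have hne : T.Nonempty := ⟨μ₀, hμ₀S, rfl⟩
    have hmem := Function.argminOn_mem f T hne
    refine ⟨Function.argminOn f T hne, hmem, fun ν hν => ?_⟩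
    have h := Function.argminOn_le f T hν
    have h1 := hbound ν
    have h2 := hmem.2
    have h3 := hν.2
    generalize Function.argminOn f T hne = m at h h2 ⊢
    simp only [f] at h
    omega
  have hstay : ∀ γ ∈ c.R, suppIn P γ → ∀ k : ℤ, μ + k • c.cor γ ∈ S := by
    intro γ hγ hγP k i hi
    simp [hμS i hi, hcorP γ hγ hγP i hi]
  refine ⟨μ, hμS, fun γ hγ hγ0 hγP => ?_⟩
  have hlow : -1 ≤ c.pair γ μ := by
    by_contra! hlt
    have h1 := hμ₀ _ (hstay γ hγ hγP 1)
    have h2 := hmove γ hγ μ 1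
    have h3 := (hcor γ hγ).1
    have h4 : D ^ 2 * (1 * c.pair γ μ + 1 ^ 2) < 0 :=
      mul_neg_of_pos_of_neg (by positivity) (by linarith)
    have h5 := mul_nonneg h3.le (sub_nonneg.mpr (hμN ▸ h1))
    linarith
  have hsimple : ∀ i ∈ P, c.pair (Pi.single i 1) μ ≤ 0 := by
    intro i hi
    by_contra! hgt
    have hsingle : suppIn P (Pi.single i 1 : Fin n → ℤ) := fun j hj => by
      rw [Pi.single_apply, if_neg]
      rintro rfl
      exact hj hi
    have h1 := hmove _ (c.simple_mem i) μ (-c.pair (Pi.single i 1) μ)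
    have h2 := hstay _ (c.simple_mem i) hsingle (-c.pair (Pi.single i 1) μ)
    have h3 := (hcor _ (c.simple_mem i)).1
    have h4 : D ^ 2 * (-c.pair (Pi.single i 1) μ * c.pair (Pi.single i 1) μ +
        (-c.pair (Pi.single i 1) μ) ^ 2) = 0 := by ring
    rw [h4] at h1
    have h5 := sub_eq_zero.mp ((mul_eq_zero.mp h1).resolve_left h3.ne')
    have h6 := hμ _ ⟨h2, h5.trans hμN⟩
    rw [c.cor_simple] at h6
    simp only [Pi.add_apply, Pi.smul_apply, smul_eq_mul, Finset.sum_add_distrib,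
      ← Finset.mul_sum, Finset.sum_pi_single', Finset.mem_univ, if_true, mul_one] at h6
    linarith
  have hup : c.pair γ μ ≤ 0 := by
    rw [c.pair_eq_sum]
    refine Finset.sum_nonpos fun i _ => ?_
    by_cases hi : i ∈ P
    · exact mul_nonpos_of_nonneg_of_nonpos (hγ0 i) (hsimple i hi)
    · simp [hγP i hi]
  omega

end RootSystemData

/-- **Peterson–Woodward lifting.**  For every coset `λ_P ∈ Q^∨/Q_P^∨` (represented by
`lam ∈ Q^∨`) there is a unique `λ_B ∈ Q^∨` such that `λ_P = λ_B + Q_P^∨` and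
`⟨α, λ_B⟩ ∈ {0, -1}` for all `α ∈ R_P^+`. -/
theorem peterson_woodward_lifting {n : ℕ} (c : RootSystemData n)
    (P : Finset (Fin n)) (lam : Fin n → ℤ) :
    ∃! lamB : Fin n → ℤ,
      (∀ i, i ∉ P → lam i = lamB i) ∧
      ∀ γ ∈ c.R, (∀ i, 0 ≤ γ i) → suppIn P γ →
        c.pair γ lamB = 0 ∨ c.pair γ lamB = -1 := by
  obtain ⟨μ, hμ, hμ'⟩ := c.exists_lift P lam
  refine ⟨μ, ⟨hμ, hμ'⟩, fun ν ⟨hν, hν'⟩ => ?_⟩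
  rw [← sub_eq_zero]
  refine c.eq_zero_of_minuscule P _ (fun i hi => by simp [← hμ i hi, ← hν i hi]) ?_
  have hpos : ∀ γ ∈ c.R, (∀ i, 0 ≤ γ i) → suppIn P γ → |c.pair γ (ν - μ)| ≤ 1 := by
    intro γ hγ h0 hP
    rw [c.pair_sub_right, abs_le]
    have h1 := hμ' γ hγ h0 hP
    have h2 := hν' γ hγ h0 hP
    omega
  intro γ hγ hP
  rcases c.pos_or_neg γ hγ with h | h
  · exact hpos γ hγ h hP
  · have h1 := hpos (-γ) (c.neg_mem γ hγ) (fun i => by simpa using h i)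
      (fun i hi => by simp [hP i hi])
    rwa [← neg_one_smul ℤ γ, c.pair_smul_left, neg_one_mul, abs_neg] at h1
end

section
/- Let w = u_{i_r}^{(r)}u_{i_{r−1}}^{(r−1)}⋯u_{i_1}^{(1)} with 0 ≤ i_k ≤ k for each k (so w ∈ W_{Δ_P} and gr(w) = Σ_{k=1}^r i_k e_k), and let 1 ≤ j ≤ m ≤ r. (a) If ℓ(u_j^{(m)}w) = j + ℓ(w), then gr(u_j^{(m)}w) = gr(w) + j·e_k for a unique 1 ≤ k ≤ r. (b) If ℓ(s_jw) = ℓ(w) − 1, then gr(s_jw) = gr(w) − e_k for a unique 1 ≤ k ≤ r. (c) ℓ(ws_j) = ℓ(w) − 1 if and only if i_j ≥ i_{j−1} + 1 (with i_0 := 0); in that case gr(ws_j) is obtained from gr(w) by replacing the (j−1)-st component i_{j−1} by i_j − 1 and the j-th component i_j by i_{j−1} (for j = 1 this reads gr(ws_1) = gr(w) − e_1). Furthermore, if w' ∈ W_{Δ_P} satisfies ℓ(w'w) = ℓ(w) ± ℓ(w'), then there exist nonnegative integers p_1,…,p_r with Σ_{k=1}^r p_k = ℓ(w') and gr(w'w)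 = gr(w) ± Σ_{k=1}^r p_k e_k. -/
/-!
The grading `gr` is read off from inversion sets.  Write `Inv w` for the set of positive roots made
negative by `w`.  The exchange property gives `ℓ(w) = |Inv w|` (`len_eq_card_Inv`).  If
`w = v_{r+1} ⋯ v_1` is the decomposition along `Δ_1 ⊂ ⋯ ⊂ Δ_{r+1}`, then `ℓ(v_t)` is the number of
inversions of `w` that are roots of `Δ_t` but not of `Δ_{t-1}` (`IsDecomp.len_eq`), since the
factors to the left of `v_t` preserve the signs of roots of `Δ_t`, and those to the right permute
the positive roots of `Δ_t` outside `Δ_{t-1}`.  So `gr w` depends only on `Inv w`, and no uniqueness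
of the decomposition has to be invoked.

If `ℓ(xy) = ℓ(x) + ℓ(y)`, then `Inv y ⊆ Inv (xy)`, with complement `y⁻¹ (Inv x)`; hence `gr (xy)`
exceeds `gr y` by nonnegative amounts adding up to `ℓ(x)` (`exists_gr_diff`).  This gives the final
claim, the decreasing case being `w = w'⁻¹ (w'w)`, and (b) is the case of a simple reflection.

For (a) and (c), elements of `W_{Δ_P}` act as permutations on the roots `ε_a - ε_b` of type `A_r`,
and all their inversions have this form (`exists_perm`).  The inversions of `u_j^{(m)}` are
`ε_x - ε_m` with `m - j ≤ x < m`, so those added in (a) are `ε_{x'} - ε_b` with one common `b`, which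
alone determines the component of `gr` (`exists_level_uElt`).  The components of `gr w` form
the Lehmer code of the permutation of `w` (`card_invLev_eq_code`), and (c) is the effect of an
adjacent transposition on a Lehmer code (`code_descent_iff`, `code_mul_swap`).
-/

open scoped BigOperators

namespace RootSystemData

section Helpers

open scoped Classical

variable {n : ℕ} (c : RootSystemData n)

/-! ### The action on roots -/

/-- Nonnegativity of all coordinates; for a root this means being a positive root. -/
def Pos (γ : Fin n → ℤ) : Prop := ∀ i, 0 ≤ γ i

theorem sroot_mem (i : Fin n) : c.sroot i ∈ c.R := c.simple_mem i

theorem act_s (i : Fin n) (x : Fin n → ℤ) :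
    c.act (c.s i) x = x - (∑ k, x k * c.A k i) • c.sroot i := by
  have h := c.act_refl _ (c.simple_mem i) x
  unfold s sroot
  rw [h, c.cor_simple]
  simp [Pi.single_apply]

theorem act_s_apply_ne (i k : Fin n) (h : k ≠ i) (x : Fin n → ℤ) :
    c.act (c.s i) x k = x k := by
  rw [act_s]; simp [sroot, h]

theorem A_self (i : Fin n) : c.A i i = 2 := by
  have h := c.pair_self _ (c.simple_mem i)
  rw [c.cor_simple] at h
  simpa [Pi.single_apply] using h

theorem act_s_self (i : Fin n) : c.act (c.s i) (c.sroot i) = -c.sroot i := by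
  rw [act_s]
  have : (∑ k, c.sroot i k * c.A k i) = 2 := by
    simp [sroot, Pi.single_apply, A_self]
  rw [this]; module

theorem s_mul_self (i : Fin n) : c.s i * c.s i = 1 := c.refl_sq _ (c.simple_mem i)

theorem s_inv (i : Fin n) : (c.s i)⁻¹ = c.s i := inv_eq_of_mul_eq_one_left (c.s_mul_self i)

theorem exists_word (w : c.W) : ∃ l : List (Fin n), (l.map c.s).prod = w := by
  obtain ⟨l, h⟩ := c.generated w
  exact ⟨l, h.symm⟩

theorem act_inv_act (w : c.W) (x : Fin n → ℤ) : c.act w⁻¹ (c.act w x) = x := by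
  rw [← c.act_mul, inv_mul_cancel, c.act_one]

theorem act_act_inv (w : c.W) (x : Fin n → ℤ) : c.act w (c.act w⁻¹ x) = x := by
  rw [← c.act_mul, mul_inv_cancel, c.act_one]

theorem act_inj (w : c.W) : Function.Injective (c.act w) := fun x y h => by
  rw [← c.act_inv_act w x, h, c.act_inv_act]

/-- Additivity is not part of the structure; it is inherited from the simple reflections,
which generate `W`. -/
theorem act_add (w : c.W) (x y : Fin n → ℤ) : c.act w (x + y) = c.act w x + c.act w y := by
  obtain ⟨l, rfl⟩ := c.exists_word w
  induction l with
  | nil => simp [c.act_one]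
  | cons i l ih =>
    simp only [List.map_cons, List.prod_cons, c.act_mul]
    rw [ih]
    simp only [act_s, Pi.add_apply, add_mul, Finset.sum_add_distrib]
    module

/-- The action of a Weyl group element as an additive map. -/
def actHom (w : c.W) : (Fin n → ℤ) →+ (Fin n → ℤ) := AddMonoidHom.mk' (c.act w) (c.act_add w)

theorem act_neg (w : c.W) (x : Fin n → ℤ) : c.act w (-x) = -c.act w x :=
  (c.actHom w).map_neg x

theorem act_expand (w : c.W) (x : Fin n → ℤ) :
    c.act w x = ∑ i, x i • c.act w (c.sroot i) := by
  have h : x = ∑ i, x i • c.sroot i := by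
    ext k; simp [sroot, Pi.single_apply]
  conv_lhs => rw [h]
  change c.actHom w _ = _
  rw [map_sum]
  refine Finset.sum_congr rfl fun i _ => ?_
  rw [map_zsmul]; rfl

theorem pos_sroot (i : Fin n) : Pos (c.sroot i) := fun k => by
  simp only [sroot, Pi.single_apply]; split_ifs <;> simp

theorem not_pos_neg {γ : Fin n → ℤ} (h : γ ∈ c.R) (hp : Pos γ) : ¬ Pos (-γ) := fun hn =>
  c.root_ne_zero γ h (by
    ext i
    have h1 := hp i
    have h2 := hn i
    simp only [Pi.neg_apply, Pi.zero_apply] at h2 ⊢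
    omega)

theorem pos_neg_of_not_pos {γ : Fin n → ℤ} (h : γ ∈ c.R) (hp : ¬ Pos γ) : Pos (-γ) := by
  rcases c.pos_or_neg γ h with h1 | h1
  · exact absurd h1 hp
  · intro i
    have := h1 i
    simp only [Pi.neg_apply]
    omega

theorem pos_of_apply_pos {γ : Fin n → ℤ} (h : γ ∈ c.R) {i : Fin n} (hi : 0 < γ i) : Pos γ := by
  rcases c.pos_or_neg γ h with h1 | h1
  · exact h1
  · have := h1 i
    omega

/-- A simple reflection permutes the positive roots other than its own simple root. -/
theorem pos_act_s {i : Fin n} {β : Fin n → ℤ} (hβ : β ∈ c.R) (hp : Pos β)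
    (hne : β ≠ c.sroot i) : Pos (c.act (c.s i) β) := by
  by_cases hk : ∃ k, k ≠ i ∧ 0 < β k
  · obtain ⟨k, hki, hk⟩ := hk
    refine c.pos_of_apply_pos (c.act_mem _ _ hβ) (i := k) ?_
    rwa [c.act_s_apply_ne i k hki]
  · push Not at hk
    have hb : β = β i • c.sroot i := by
      ext k
      by_cases h : k = i
      · subst h; simp [sroot]
      · have h1 := hk k h
        have h2 := hp k
        simp only [sroot, Pi.smul_apply, Pi.single_apply, h, if_false, smul_zero]
        omega
    rcases c.reduced _ (c.simple_mem i) (β i) (by rw [hb] at hβ; exact hβ) with h | h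
    · rw [h, one_smul] at hb; exact absurd hb hne
    · have := hp i
      omega

/-! ### Length equals the number of inversions -/

/-- The inversion set of `w`: the positive roots made negative by `w`. -/
noncomputable def Inv (w : c.W) : Finset (Fin n → ℤ) :=
  c.R.filter fun β => Pos β ∧ ¬ Pos (c.act w β)

theorem mem_Inv {w : c.W} {β : Fin n → ℤ} :
    β ∈ c.Inv w ↔ β ∈ c.R ∧ Pos β ∧ ¬ Pos (c.act w β) := by simp [Inv]

theorem Inv_one : c.Inv 1 = ∅ := by
  ext β; simp only [mem_Inv, c.act_one, Finset.notMem_empty, iff_false]; tauto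

theorem Inv_s_mul {w : c.W} {i : Fin n} (h : Pos (c.act w⁻¹ (c.sroot i))) :
    c.Inv (c.s i * w) = insert (c.act w⁻¹ (c.sroot i)) (c.Inv w) := by
  ext β
  simp only [Finset.mem_insert, mem_Inv, c.act_mul]
  by_cases hb : β = c.act w⁻¹ (c.sroot i)
  · subst hb
    simp only [act_act_inv, act_s_self, true_or, iff_true]
    exact ⟨c.act_mem _ _ (c.sroot_mem i), h, c.not_pos_neg (c.sroot_mem i) (c.pos_sroot i)⟩
  · simp only [hb, false_or]
    refine and_congr_right fun hR => and_congr_right fun hp => not_congr ?_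
    have hwR := c.act_mem w _ hR
    have hne : c.act w β ≠ c.sroot i := fun h' => hb (by rw [← h', act_inv_act])
    constructor
    · intro h1
      by_contra h2
      have h3 := c.pos_neg_of_not_pos hwR h2
      have hne' : -c.act w β ≠ c.sroot i := fun h' => by
        rw [← h', act_neg, act_inv_act] at h
        exact c.not_pos_neg hR hp h
      have h4 := c.pos_act_s (c.neg_mem _ hwR) h3 hne'
      rw [act_neg] at h4
      exact c.not_pos_neg (c.act_mem _ _ hwR) h1 h4
    · intro h1
      exact c.pos_act_s hwR h1 hne

theorem card_Inv_s_mul {w : c.W} {i : Fin n} (h : Pos (c.act w⁻¹ (c.sroot i))) :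
    (c.Inv (c.s i * w)).card = (c.Inv w).card + 1 := by
  rw [c.Inv_s_mul h, Finset.card_insert_of_notMem]
  simp [mem_Inv, act_act_inv, c.pos_sroot]

/-- The exchange property: if `x⁻¹` makes the positive root `γ` negative, then a word for
`s_γ x` arises from any word for `x` by deleting one letter. -/
theorem exchange (l : List (Fin n)) (γ : Fin n → ℤ) (hγ : γ ∈ c.R) (hp : Pos γ)
    (hn : ¬ Pos (c.act ((l.map c.s).prod)⁻¹ γ)) :
    ∃ l' : List (Fin n), l'.length + 1 = l.length ∧
      (l'.map c.s).prod = c.σ γ * (l.map c.s).prod := by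
  induction l generalizing γ with
  | nil => simp [c.act_one, hp] at hn
  | cons k l ih =>
    by_cases hk : γ = c.sroot k
    · refine ⟨l, by simp, ?_⟩
      rw [List.map_cons, List.prod_cons, hk]
      change _ = c.s k * (c.s k * _)
      rw [← mul_assoc, s_mul_self, one_mul]
    · have h1 := c.pos_act_s hγ hp hk
      rw [List.map_cons, List.prod_cons, mul_inv_rev, s_inv, c.act_mul] at hn
      obtain ⟨l', hl, hprod⟩ := ih _ (c.act_mem _ _ hγ) h1 hn
      refine ⟨k :: l', by simp [hl], ?_⟩
      rw [List.map_cons, List.prod_cons, hprod, c.refl_act _ _ hγ, s_inv]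
      simp only [List.map_cons, List.prod_cons, ← mul_assoc, s_mul_self, one_mul]

theorem len_le (l : List (Fin n)) : c.len (l.map c.s).prod ≤ l.length :=
  Nat.sInf_le ⟨l, rfl, rfl⟩

theorem exists_reduced (w : c.W) :
    ∃ l : List (Fin n), l.length = c.len w ∧ (l.map c.s).prod = w := by
  obtain ⟨l, h⟩ := c.exists_word w
  exact Nat.sInf_mem (s := {k | ∃ l : List (Fin n), l.length = k ∧ (l.map c.s).prod = w})
    ⟨l.length, l, rfl, h⟩

theorem len_eq_card_Inv (w : c.W) : c.len w = (c.Inv w).card := by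
  -- Induction along a reduced word: by exchange, each letter adds an inversion.
  have key : ∀ l : List (Fin n), c.len (l.map c.s).prod = l.length →
      (c.Inv (l.map c.s).prod).card = l.length := by
    intro l
    induction l with
    | nil => intro; simp [Inv_one]
    | cons i l ih =>
      intro hl
      have hmin : c.len (l.map c.s).prod = l.length := by
        refine le_antisymm (c.len_le l) ?_
        obtain ⟨l', h1, h2⟩ := c.exists_reduced (l.map c.s).prod
        have h3 := c.len_le (i :: l')
        simp only [List.map_cons, List.prod_cons, h2, List.length_cons] at h3 hl
        omega
      have ih' := ih hmin
      rw [List.map_cons, List.prod_cons]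
      by_cases hp : Pos (c.act ((l.map c.s).prod)⁻¹ (c.sroot i))
      · rw [c.card_Inv_s_mul hp, ih']; simp
      · exfalso
        obtain ⟨l', h1, h2⟩ := c.exchange l _ (c.sroot_mem i) (c.pos_sroot i) hp
        have h3 := c.len_le l'
        rw [h2] at h3
        simp only [List.map_cons, List.prod_cons, List.length_cons] at hl
        change c.len (c.s i * _) ≤ _ at h3
        omega
  obtain ⟨l, h1, h2⟩ := c.exists_reduced w
  have := key l (by rw [h2, h1])
  rw [h2] at this
  rw [this, h1]

theorem len_inv (w : c.W) : c.len w⁻¹ = c.len w := by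
  have key : ∀ w : c.W, c.len w⁻¹ ≤ c.len w := fun w => by
    obtain ⟨l, h1, h2⟩ := c.exists_reduced w
    have h3 := c.len_le l.reverse
    have h4 : (l.reverse.map c.s).prod = w⁻¹ := by
      rw [← h2, List.prod_inv_reverse, List.map_reverse, List.map_map]
      congr 2
      exact List.map_congr_left fun i _ => (c.s_inv i).symm
    rw [h4, List.length_reverse, h1] at h3
    exact h3
  refine le_antisymm (key w) ?_
  have := key w⁻¹
  rwa [inv_inv] at this

theorem len_mul_s_of_pos {w : c.W} {i : Fin n} (h : Pos (c.act w (c.sroot i))) :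
    c.len (w * c.s i) = c.len w + 1 := by
  have h1 := c.card_Inv_s_mul (w := w⁻¹) (i := i) (by rwa [inv_inv])
  rw [← len_eq_card_Inv, ← len_eq_card_Inv, len_inv] at h1
  rw [← h1, ← len_inv, mul_inv_rev, s_inv]

theorem len_mul_s_of_not_pos {w : c.W} {i : Fin n} (h : ¬ Pos (c.act w (c.sroot i))) :
    c.len (w * c.s i) + 1 = c.len w := by
  have h1 := c.len_mul_s_of_pos (w := w * c.s i) (i := i) (by
    rw [c.act_mul, act_s_self, act_neg]
    exact c.pos_neg_of_not_pos (c.act_mem _ _ (c.sroot_mem i)) h)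
  rw [mul_assoc, s_mul_self, mul_one] at h1
  exact h1.symm

theorem Inv_mul_subset (x y : c.W) :
    c.Inv (x * y) ⊆ c.Inv y ∪ (c.Inv x).image (c.act y⁻¹) := by
  intro β hβ
  rw [mem_Inv, c.act_mul] at hβ
  rw [Finset.mem_union, Finset.mem_image, mem_Inv]
  by_cases h : Pos (c.act y β)
  · exact Or.inr ⟨c.act y β, (c.mem_Inv).2 ⟨c.act_mem _ _ hβ.1, h, hβ.2.2⟩, c.act_inv_act y β⟩
  · exact Or.inl ⟨hβ.1, hβ.2.1, h⟩

/-- When lengths add, the inversion set of the right factor persists in the product. -/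
theorem Inv_subset_of_len {x y : c.W} (h : c.len (x * y) = c.len y + c.len x) :
    c.Inv y ⊆ c.Inv (x * y) := by
  have h1 := c.Inv_mul_subset x y
  have h2 : (c.Inv y ∪ (c.Inv x).image (c.act y⁻¹)).card ≤ (c.Inv (x * y)).card := by
    rw [← len_eq_card_Inv, h, len_eq_card_Inv, len_eq_card_Inv]
    exact (Finset.card_union_le _ _).trans (Nat.add_le_add_left Finset.card_image_le _)
  rw [Finset.eq_of_subset_of_card_le h1 h2]
  exact Finset.subset_union_left

/-! ### Graded inversion counts -/

theorem act_apply_of_notMem {S : Finset (Fin n)} {w : c.W} (hw : w ∈ c.Wsub S) :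
    ∀ (x : Fin n → ℤ) (k : Fin n), k ∉ S → c.act w x k = x k := by
  induction hw using Subgroup.closure_induction with
  | mem w h =>
    obtain ⟨i, hi, rfl⟩ := h
    intro x k hk
    exact c.act_s_apply_ne i k (fun h => hk (h ▸ hi)) x
  | one => intro x k _; rw [c.act_one]
  | mul a b _ _ ha hb => intro x k hk; rw [c.act_mul, ha _ k hk, hb _ k hk]
  | inv a _ ha =>
    intro x k hk
    rw [← ha (c.act a⁻¹ x) k hk, act_act_inv]

theorem suppIn_act {S : Finset (Fin n)} {w : c.W} (hw : w ∈ c.Wsub S) (x : Fin n → ℤ) :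
    suppIn S (c.act w x) ↔ suppIn S x :=
  forall_congr' fun k => forall_congr' fun hk => by rw [c.act_apply_of_notMem hw x k hk]

theorem Wsub_mono {S T : Finset (Fin n)} (h : S ⊆ T) : c.Wsub S ≤ c.Wsub T :=
  Subgroup.closure_mono (Set.image_mono (by exact_mod_cast h))

theorem suppIn_mono {S T : Finset (Fin n)} (h : S ⊆ T) {x : Fin n → ℤ} (hx : suppIn S x) :
    suppIn T x := fun i hi => hx i fun h' => hi (h h')

theorem suppIn_of_mem_Inv {S : Finset (Fin n)} {w : c.W} (hw : w ∈ c.Wsub S)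
    {β : Fin n → ℤ} (hβ : β ∈ c.Inv w) : suppIn S β := by
  rw [mem_Inv] at hβ
  intro k hk
  by_contra hne
  have h1 := hβ.2.1 k
  refine hβ.2.2 (c.pos_of_apply_pos (c.act_mem _ _ hβ.1) (i := k) ?_)
  rw [c.act_apply_of_notMem hw _ k hk]
  omega

/-- An element of minimal length in its coset modulo `W_S` keeps the simple roots of `S`
positive. -/
theorem MinRep.pos {T S : Finset (Fin n)} {v : c.W} (h : c.MinRep T S v) (i : Fin n)
    (hi : i ∈ S) : Pos (c.act v (c.sroot i)) := by
  by_contra hn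
  have h1 := c.len_mul_s_of_not_pos hn
  have h2 := h.2 (c.s i) (Subgroup.subset_closure ⟨i, hi, rfl⟩)
  omega

theorem pos_act_of_suppIn {S : Finset (Fin n)} {v : c.W}
    (h : ∀ i ∈ S, Pos (c.act v (c.sroot i))) {β : Fin n → ℤ} (hs : suppIn S β)
    (hp : Pos β) : Pos (c.act v β) := by
  intro k
  rw [act_expand, Finset.sum_apply]
  refine Finset.sum_nonneg fun i _ => ?_
  by_cases hi : i ∈ S
  · exact mul_nonneg (hp i) (h i hi k)
  · simp [hs i hi]

theorem pos_act_iff_of_suppIn {S : Finset (Fin n)} {v : c.W}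
    (h : ∀ i ∈ S, Pos (c.act v (c.sroot i))) {β : Fin n → ℤ} (hR : β ∈ c.R)
    (hs : suppIn S β) : Pos (c.act v β) ↔ Pos β := by
  refine ⟨fun h1 => ?_, c.pos_act_of_suppIn h hs⟩
  by_contra h2
  have h3 := c.pos_act_of_suppIn h (β := -β) (fun i hi => by simp [hs i hi])
    (c.pos_neg_of_not_pos hR h2)
  rw [act_neg] at h3
  exact c.not_pos_neg (c.act_mem _ _ hR) h1 h3

theorem deltaSet_mono {r a b : ℕ} (hab : a ≤ b) (hb : b ≤ r + 1) :
    deltaSet n r a ⊆ deltaSet n r b := by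
  intro i
  unfold deltaSet
  split_ifs <;> simp <;> omega

/-- The descending product `v_{k-1} ⋯ v_1 v_0`. -/
def dprod (v : ℕ → c.W) : ℕ → c.W
  | 0 => 1
  | k + 1 => v k * dprod v k

theorem ofFn_reverse_prod (v : ℕ → c.W) (N : ℕ) :
    (List.ofFn fun t : Fin N => v t).reverse.prod = c.dprod v N := by
  induction N with
  | zero => simp [dprod]
  | succ N ih =>
    rw [List.ofFn_succ']
    simp [dprod, ← ih]

theorem dprod_mem {r : ℕ} {v : ℕ → c.W}
    (h1 : ∀ k < r + 1, v k ∈ c.Wsub (deltaSet n r (k + 1))) {t : ℕ} (ht : t ≤ r + 1) :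
    c.dprod v t ∈ c.Wsub (deltaSet n r t) := by
  induction t with
  | zero => exact one_mem _
  | succ t ih =>
    exact mul_mem (h1 t (by omega)) (c.Wsub_mono (deltaSet_mono (by omega) ht) (ih (by omega)))

/-- The inversions of `w` that are roots of `Δ_{t+1}` but not of `Δ_t`; their number is the
`(t+1)`-st component of `gr w`. -/
noncomputable def invLev (r : ℕ) (w : c.W) (t : ℕ) : Finset (Fin n → ℤ) :=
  (c.Inv w).filter fun β => suppIn (deltaSet n r (t + 1)) β ∧ ¬ suppIn (deltaSet n r t) β

theorem pos_dprod_iff {r : ℕ} {v : ℕ → c.W}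
    (h1 : ∀ k < r + 1, v k ∈ c.Wsub (deltaSet n r (k + 1)))
    (h2 : ∀ k < r + 1, ∀ i ∈ deltaSet n r k, Pos (c.act (v k) (c.sroot i)))
    {t N : ℕ} (ht : t ≤ N) (hN : N ≤ r + 1) {β : Fin n → ℤ} (hR : β ∈ c.R)
    (hs : suppIn (deltaSet n r t) β) :
    Pos (c.act (c.dprod v N) β) ↔ Pos (c.act (c.dprod v t) β) := by
  induction N, ht using Nat.le_induction with
  | base => rfl
  | succ N htN ih =>
    rw [dprod, c.act_mul, c.pos_act_iff_of_suppIn (h2 N (by omega)) (c.act_mem _ _ hR),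
      ih (by omega)]
    rw [c.suppIn_act (c.dprod_mem h1 (by omega))]
    exact suppIn_mono (deltaSet_mono htN (by omega)) hs

/-- In a decomposition `w = v_{r+1} ⋯ v_1`, the length of each factor is a graded inversion
count of `w` itself: the factors to the left preserve signs of roots of `Δ_{t+1}`, and those to
the right permute the positive roots of `Δ_{t+1}` outside `Δ_t`. -/
theorem card_Inv_factor {r : ℕ} {v : ℕ → c.W}
    (h1 : ∀ k < r + 1, v k ∈ c.Wsub (deltaSet n r (k + 1)))
    (h2 : ∀ k < r + 1, ∀ i ∈ deltaSet n r k, Pos (c.act (v k) (c.sroot i)))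
    {t : ℕ} (ht : t < r + 1) :
    (c.Inv (v t)).card = (c.invLev r (c.dprod v (r + 1)) t).card := by
  have hx : c.dprod v t ∈ c.Wsub (deltaSet n r t) := c.dprod_mem h1 ht.le
  have hx' := c.Wsub_mono (deltaSet_mono (Nat.le_succ t) (by omega)) hx
  set x := c.dprod v t with hxdef
  have hlev : c.invLev r (c.dprod v (r + 1)) t = (c.Inv (v t)).image (c.act x⁻¹) := by
    ext β
    rw [invLev, Finset.mem_filter, mem_Inv, Finset.mem_image]
    constructor
    · rintro ⟨⟨hR, hp, hn⟩, hs1, hs2⟩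
      rw [c.pos_dprod_iff h1 h2 (t := t + 1) (by omega) le_rfl hR hs1, dprod, c.act_mul,
        ← hxdef] at hn
      refine ⟨c.act x β, ?_, c.act_inv_act _ _⟩
      rw [mem_Inv]
      refine ⟨c.act_mem _ _ hR, ?_, hn⟩
      have : ∃ k, k ∉ deltaSet n r t ∧ β k ≠ 0 := by
        unfold suppIn at hs2; push Not at hs2; exact hs2
      obtain ⟨k, hk, hk0⟩ := this
      refine c.pos_of_apply_pos (c.act_mem _ _ hR) (i := k) ?_
      rw [c.act_apply_of_notMem hx _ k hk]
      have := hp k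
      omega
    · rintro ⟨γ, hγ, rfl⟩
      have hs1 := c.suppIn_of_mem_Inv (h1 t ht) hγ
      rw [mem_Inv] at hγ
      obtain ⟨hR, hp, hn⟩ := hγ
      have hs2 : ¬ suppIn (deltaSet n r t) γ := fun h =>
        hn (c.pos_act_of_suppIn (h2 t ht) h hp)
      have hR' := c.act_mem x⁻¹ _ hR
      have hs1' := (c.suppIn_act (inv_mem hx') γ).2 hs1
      refine ⟨⟨hR', ?_, ?_⟩, hs1', fun h => hs2 ((c.suppIn_act (inv_mem hx) γ).1 h)⟩
      · have : ∃ k, k ∉ deltaSet n r t ∧ γ k ≠ 0 := by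
          unfold suppIn at hs2; push Not at hs2; exact hs2
        obtain ⟨k, hk, hk0⟩ := this
        refine c.pos_of_apply_pos hR' (i := k) ?_
        rw [c.act_apply_of_notMem (inv_mem hx) _ k hk]
        have := hp k
        omega
      · rwa [c.pos_dprod_iff h1 h2 (t := t + 1) (by omega) le_rfl hR' hs1', dprod, c.act_mul,
          ← hxdef, act_act_inv]
  rw [hlev, Finset.card_image_of_injective _ (c.act_inj _)]

theorem IsDecomp.len_eq {r : ℕ} {w : c.W} {v : Fin (r + 1) → c.W} (h : c.IsDecomp r w v)
    (t : Fin (r + 1)) : c.len (v t) = (c.invLev r w t).card := by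
  set v' : ℕ → c.W := fun k => if hk : k < r + 1 then v ⟨k, hk⟩ else 1 with hv'
  have hv : ∀ k : Fin (r + 1), v' k = v k := fun k => by
    rw [hv']; exact dif_pos k.2
  have hw : w = c.dprod v' (r + 1) := by
    rw [h.2, ← ofFn_reverse_prod]
    simp only [hv]
  rw [hw, ← c.card_Inv_factor _ _ t.2, hv, len_eq_card_Inv]
  · intro k hk
    rw [hv ⟨k, hk⟩]; exact (h.1 ⟨k, hk⟩).1
  · intro k hk
    rw [hv ⟨k, hk⟩]; exact MinRep.pos c (h.1 ⟨k, hk⟩)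

theorem sum_card_invLev (r : ℕ) (w : c.W) :
    ∑ t : Fin (r + 1), (c.invLev r w t).card = c.len w := by
  have key : ∀ N ≤ r + 1, ∑ t ∈ Finset.range N, (c.invLev r w t).card =
      ((c.Inv w).filter fun β => suppIn (deltaSet n r N) β).card := by
    intro N hN
    induction N with
    | zero =>
      symm
      rw [Finset.sum_range_zero, Finset.card_eq_zero, Finset.filter_eq_empty_iff]
      intro β hβ hs
      refine c.root_ne_zero β ((c.mem_Inv).1 hβ).1 ?_
      ext i
      exact hs i (by simp [deltaSet])
    | succ N ih =>
      rw [Finset.sum_range_succ, ih (by omega), invLev, ← Finset.card_union_of_disjoint]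
      · congr 1
        ext β
        have := suppIn_mono (x := β) (deltaSet_mono (n := n) (Nat.le_succ N) hN)
        simp only [Finset.mem_union, Finset.mem_filter]
        tauto
      · rw [Finset.disjoint_left]
        intro β
        simp only [Finset.mem_filter]
        tauto
  rw [Fin.sum_univ_eq_sum_range (fun t => (c.invLev r w t).card), key _ le_rfl, len_eq_card_Inv]
  congr 1
  rw [Finset.filter_eq_self]
  intro β _ i hi
  simp [deltaSet] at hi

theorem invLev_last {r : ℕ} {w : c.W} (hw : w ∈ c.Wsub (deltaSet n r r)) :
    (c.invLev r w r).card = 0 := by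
  rw [Finset.card_eq_zero, invLev, Finset.filter_eq_empty_iff]
  intro β hβ h
  exact h.2 (c.suppIn_of_mem_Inv hw hβ)

/-! ### The permutation model of `W_{Δ_P}` -/

/-- The root `ε_a - ε_b` of type `A` with `0`-based indices, i.e. `α_{a+1} + ⋯ + α_b` when
`a < b` and its negative when `b < a`. -/
def rt (n a b : ℕ) : Fin n → ℤ := fun i =>
  (if a ≤ (i : ℕ) then 1 else 0) - (if b ≤ (i : ℕ) then 1 else 0)

theorem rt_succ (i : Fin n) : rt n i (i + 1) = c.sroot i := by
  ext k
  simp only [rt, sroot, Pi.single_apply, Fin.ext_iff]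
  split_ifs <;> omega

theorem neg_rt (a b : ℕ) : -rt n a b = rt n b a := by
  ext k; simp [rt]

theorem rt_eq_zero_of_ge {a b r : ℕ} (ha : a ≤ r) (hb : b ≤ r) (k : Fin n) (hk : r ≤ k) :
    rt n a b k = 0 := by
  simp only [rt]
  split_ifs <;> omega

theorem act_s_rt {r : ℕ} (hrn : r < n) (hA : c.PathA r) (i : Fin n) (hi : (i : ℕ) < r)
    {a b : ℕ} (ha : a ≤ r) (hb : b ≤ r) :
    c.act (c.s i) (rt n a b) =
      rt n (Equiv.swap (i : ℕ) (i + 1) a) (Equiv.swap (i : ℕ) (i + 1) b) := by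
  have hsum : (∑ k, rt n a b k * c.A k i) =
      ((if a = i then 1 else 0) - (if a = i + 1 then 1 else 0)) -
        ((if b = i then 1 else 0) - (if b = i + 1 then 1 else 0)) := by
    set f : ℕ → ℤ := fun k => (if a ≤ k then 1 else 0) - (if b ≤ k then 1 else 0) with hf
    have hterm : ∀ k : Fin n, rt n a b k * c.A k i =
        (if (k : ℕ) = i then 2 * f k else 0) - (if (k : ℕ) = i + 1 then f k else 0)
          - (if (k : ℕ) + 1 = i then f k else 0) := by
      intro k
      have hfk : rt n a b k = f k := rfl
      by_cases hk : (k : ℕ) < r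
      · have hAk := hA k i hk hi
        by_cases h1 : (k : ℕ) = i
        · have : k = i := Fin.ext h1
          subst this
          simp [A_self, hfk, mul_comm]
        · by_cases h2 : (k : ℕ) = i + 1
          · rw [hAk.1 (by omega), hfk]
            rw [if_neg h1, if_pos h2, if_neg (by omega)]
            ring
          · by_cases h3 : (k : ℕ) + 1 = i
            · rw [hAk.1 (by omega), hfk]
              simp [h1, h2, h3]
            · rw [hAk.2 (by omega)]
              simp [h1, h2, h3]
      · have h0 := rt_eq_zero_of_ge (n := n) ha hb k (by omega)
        rw [h0, ← hfk, h0]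
        simp
    rw [Finset.sum_congr rfl fun k _ => hterm k]
    rw [Finset.sum_sub_distrib, Finset.sum_sub_distrib,
      Fin.sum_univ_eq_sum_range (fun k => if k = (i : ℕ) then 2 * f k else 0) n,
      Fin.sum_univ_eq_sum_range (fun k => if k = (i : ℕ) + 1 then f k else 0) n,
      Fin.sum_univ_eq_sum_range (fun k => if k + 1 = (i : ℕ) then f k else 0) n]
    have e1 : (∑ k ∈ Finset.range n, if k = (i : ℕ) then 2 * f k else 0) = 2 * f i := by
      rw [Finset.sum_ite_eq' (Finset.range n) (i : ℕ)]; simp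
    have e2 : (∑ k ∈ Finset.range n, if k = (i : ℕ) + 1 then f k else 0) = f (i + 1) := by
      rw [Finset.sum_ite_eq' (Finset.range n) ((i : ℕ) + 1)]
      simp; omega
    have e3 : (∑ k ∈ Finset.range n, if k + 1 = (i : ℕ) then f k else 0) =
        if (i : ℕ) = 0 then 0 else f (i - 1) := by
      split_ifs with h0
      · exact Finset.sum_eq_zero fun k _ => by simp [h0]
      · rw [Finset.sum_eq_single ((i : ℕ) - 1)]
        · rw [if_pos (by omega)]
        · intro k _ hk
          rw [if_neg (by omega)]
        · intro hk
          simp at hk; omega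
    have hone : ∀ a : ℕ, (2 * (if a ≤ (i : ℕ) then 1 else 0) - (if a ≤ (i : ℕ) + 1 then 1 else 0)
        - (if (i : ℕ) = 0 then 0 else if a ≤ (i : ℕ) - 1 then 1 else 0) : ℤ) =
          (if a = i then 1 else 0) - (if a = i + 1 then 1 else 0) := by
      intro a
      split_ifs <;> omega
    rw [e1, e2, e3, ← hone a, ← hone b]
    simp only [hf]
    by_cases h0 : (i : ℕ) = 0
    · simp only [if_pos h0]; ring
    · simp only [if_neg h0]; ring
  rw [act_s, hsum]
  ext k
  have hone : ∀ a : ℕ, ((if Equiv.swap (i : ℕ) (i + 1) a ≤ (k : ℕ) then 1 else 0 : ℤ)) =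
      (if a ≤ (k : ℕ) then 1 else 0) - ((if a = i then 1 else 0) - (if a = i + 1 then 1 else 0)) *
        (if (k : ℕ) = i then 1 else 0) := by
    intro a
    rw [Equiv.swap_apply_def]
    split_ifs <;> omega
  simp only [rt, sroot, Pi.sub_apply, Pi.smul_apply, Pi.single_apply, smul_eq_mul, Fin.ext_iff,
    hone]
  ring

/-- `π`, preserving `{0, …, r}`, describes the action of `w` on the roots `ε_a - ε_b`. -/
def IsPerm (r : ℕ) (w : c.W) (π : Equiv.Perm ℕ) : Prop :=
  (∀ a, π a ≤ r ↔ a ≤ r) ∧ ∀ a b, a ≤ r → b ≤ r → c.act w (rt n a b) = rt n (π a) (π b)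

theorem IsPerm.mul {r : ℕ} {x y : c.W} {π τ : Equiv.Perm ℕ} (hx : c.IsPerm r x π)
    (hy : c.IsPerm r y τ) : c.IsPerm r (x * y) (π * τ) := by
  refine ⟨fun a => ?_, fun a b ha hb => ?_⟩
  · rw [Equiv.Perm.mul_apply, hx.1, hy.1]
  · rw [c.act_mul, hy.2 a b ha hb, hx.2 _ _ ((hy.1 a).2 ha) ((hy.1 b).2 hb)]; rfl

theorem IsPerm.one (r : ℕ) : c.IsPerm r 1 1 := ⟨fun _ => Iff.rfl, fun _ _ _ _ => c.act_one _⟩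

theorem IsPerm.inv {r : ℕ} {x : c.W} {π : Equiv.Perm ℕ} (hx : c.IsPerm r x π) :
    c.IsPerm r x⁻¹ π⁻¹ := by
  have h1 : ∀ a, π⁻¹ a ≤ r ↔ a ≤ r := fun a => by
    rw [← hx.1]; simp
  refine ⟨h1, fun a b ha hb => ?_⟩
  apply c.act_inj x
  rw [act_act_inv, hx.2 _ _ ((h1 a).2 ha) ((h1 b).2 hb)]
  simp

theorem IsPerm.simple {r : ℕ} (hrn : r < n) (hA : c.PathA r) (i : Fin n) (hi : (i : ℕ) < r) :
    c.IsPerm r (c.s i) (Equiv.swap (i : ℕ) (i + 1)) := by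
  refine ⟨fun a => ?_, fun a b ha hb => c.act_s_rt hrn hA i hi ha hb⟩
  rw [Equiv.swap_apply_def]
  split_ifs <;> omega

theorem pos_rt_iff {r a b : ℕ} (hrn : r < n) (hb : b ≤ r) :
    Pos (rt n a b) ↔ a ≤ b := by
  constructor
  · intro h
    by_contra hab
    have := h ⟨b, by omega⟩
    simp only [rt] at this
    split_ifs at this <;> omega
  · intro h k
    simp only [rt]
    split_ifs <;> omega

theorem rt_mem {r : ℕ} (hrn : r < n) (hA : c.PathA r) {a b : ℕ} (hab : a < b) (hb : b ≤ r) :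
    rt n a b ∈ c.R := by
  induction b, hab using Nat.le_induction with
  | base =>
    have := c.rt_succ ⟨a, by omega⟩
    simp only at this
    rw [Nat.succ_eq_add_one, this]
    exact c.sroot_mem _
  | succ b hab ih =>
    have h := c.act_s_rt hrn hA ⟨b, by omega⟩ (by simp only; omega) (a := a) (b := b)
      (by omega) (by omega)
    rw [Equiv.swap_apply_left, Equiv.swap_apply_of_ne_of_ne (by simp; omega) (by simp; omega)] at h
    simp only at h
    rw [← h]
    exact c.act_mem _ _ (ih (by omega))

theorem mem_deltaSet_self {r : ℕ} (i : Fin n) {t : ℕ} (ht : t ≤ r) :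
    i ∈ deltaSet n r t ↔ (i : ℕ) < t := by
  unfold deltaSet
  rw [if_neg (by omega)]; simp

/-- Elements of `W_{Δ_P}` act through permutations, and all their inversions are of the form
`ε_a - ε_b`. -/
theorem exists_perm {r : ℕ} (hrn : r < n) (hA : c.PathA r) {w : c.W}
    (hw : w ∈ c.Wsub (deltaSet n r r)) :
    ∃ π, c.IsPerm r w π ∧ ∀ β ∈ c.Inv w, ∃ a b, a ≤ r ∧ b ≤ r ∧ β = rt n a b := by
  induction hw using Subgroup.closure_induction with
  | mem w h =>
    obtain ⟨i, hi, rfl⟩ := h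
    have hi' : (i : ℕ) < r := (mem_deltaSet_self i le_rfl).1 (by exact_mod_cast hi)
    refine ⟨_, IsPerm.simple c hrn hA i hi', fun β hβ => ⟨i, i + 1, by omega, by omega, ?_⟩⟩
    rw [mem_Inv] at hβ
    by_contra hne
    exact hβ.2.2 (c.pos_act_s hβ.1 hβ.2.1 (by rwa [rt_succ] at hne))
  | one => exact ⟨1, IsPerm.one c r, by simp [Inv_one]⟩
  | mul x y _ _ hx hy =>
    obtain ⟨π, h1, h2⟩ := hx
    obtain ⟨τ, h3, h4⟩ := hy
    refine ⟨π * τ, IsPerm.mul c h1 h3, fun β hβ => ?_⟩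
    have := c.Inv_mul_subset x y hβ
    rw [Finset.mem_union, Finset.mem_image] at this
    rcases this with h | ⟨γ, hγ, rfl⟩
    · exact h4 β h
    · obtain ⟨a, b, ha, hb, rfl⟩ := h2 γ hγ
      have h5 := IsPerm.inv c h3
      exact ⟨_, _, (h5.1 a).2 ha, (h5.1 b).2 hb, h5.2 a b ha hb⟩
  | inv x _ hx =>
    obtain ⟨π, h1, h2⟩ := hx
    refine ⟨π⁻¹, IsPerm.inv c h1, fun β hβ => ?_⟩
    rw [mem_Inv] at hβ
    obtain ⟨hR, hp, hn⟩ := hβ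
    have hR' := c.act_mem x⁻¹ _ hR
    have hmem : -c.act x⁻¹ β ∈ c.Inv x := by
      rw [mem_Inv, act_neg, act_act_inv]
      exact ⟨c.neg_mem _ hR', c.pos_neg_of_not_pos hR' hn, c.not_pos_neg hR hp⟩
    obtain ⟨a, b, ha, hb, hab⟩ := h2 _ hmem
    refine ⟨π b, π a, (h1.1 b).2 hb, (h1.1 a).2 ha, ?_⟩
    rw [← h1.2 b a hb ha, ← neg_rt, ← hab, neg_neg, act_act_inv]

theorem rt_inj {r a b a' b' : ℕ} (hrn : r < n) (hab : a < b) (hb : b ≤ r)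
    (hab' : a' < b') (hb' : b' ≤ r) (h : rt n a b = rt n a' b') : a = a' ∧ b = b' := by
  have key : ∀ {a b : ℕ}, a < b → ∀ k : Fin n, rt n a b k = 1 ↔ a ≤ (k : ℕ) ∧ (k : ℕ) < b := by
    intro a b hab k
    simp only [rt]
    split_ifs <;> simp <;> omega
  have hk : ∀ k < n, (a ≤ k ∧ k < b) ↔ (a' ≤ k ∧ k < b') := fun k hk => by
    rw [← key hab ⟨k, hk⟩, h, key hab' ⟨k, hk⟩]
  have h1 := hk a (by omega)
  have h2 := hk (b - 1) (by omega)
  have h3 := hk a' (by omega)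
  have h4 := hk (b' - 1) (by omega)
  omega

/-- The root `ε_a - ε_b` with `a < b` first occurs among the roots of `Δ_b`. -/
theorem rt_level {r a b t : ℕ} (hrn : r < n) (hab : a < b) (hb : b ≤ r) (ht : t < r) :
    (suppIn (deltaSet n r (t + 1)) (rt n a b) ∧ ¬ suppIn (deltaSet n r t) (rt n a b)) ↔
      b = t + 1 := by
  have key : ∀ s ≤ r, suppIn (deltaSet n r s) (rt n a b) ↔ b ≤ s := by
    intro s hs
    constructor
    · intro h
      by_contra hbs
      have h1 := h ⟨b - 1, by omega⟩ (by rw [mem_deltaSet_self _ hs]; simp; omega)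
      simp only [rt] at h1
      split_ifs at h1 <;> omega
    · intro h i hi
      rw [mem_deltaSet_self _ hs] at hi
      simp only [rt]
      split_ifs <;> omega
  rw [key _ (by omega), key _ (by omega)]
  omega

/-- The `k`-th entry of the Lehmer code of `π`. -/
def code (π : Equiv.Perm ℕ) (k : ℕ) : ℕ :=
  ((Finset.range k).filter fun a => π k < π a).card

theorem card_invLev_eq_code {r : ℕ} (hrn : r < n) (hA : c.PathA r) {w : c.W}
    (hw : w ∈ c.Wsub (deltaSet n r r)) {π : Equiv.Perm ℕ} (hπ : c.IsPerm r w π)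
    {t : ℕ} (ht : t < r) : (c.invLev r w t).card = code π (t + 1) := by
  symm
  refine Finset.card_bij (fun a _ => rt n a (t + 1)) ?_ ?_ ?_
  · intro a ha
    simp only [Finset.mem_filter, Finset.mem_range] at ha
    rw [invLev, Finset.mem_filter, mem_Inv, rt_level hrn ha.1 (by omega) ht,
      hπ.2 a (t + 1) (by omega) (by omega), pos_rt_iff hrn (by omega),
      pos_rt_iff hrn ((hπ.1 _).2 (by omega))]
    exact ⟨⟨c.rt_mem hrn hA ha.1 (by omega), by omega, by omega⟩, rfl⟩
  · intro a ha b hb h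
    simp only [Finset.mem_filter, Finset.mem_range] at ha hb
    exact (rt_inj hrn ha.1 (by omega) hb.1 (by omega) h).1
  · intro β hβ
    rw [invLev, Finset.mem_filter] at hβ
    obtain ⟨τ, -, h2⟩ := c.exists_perm hrn hA hw
    obtain ⟨a, b, ha, hb, rfl⟩ := h2 β hβ.1
    have h3 := (c.mem_Inv).1 hβ.1
    rw [hπ.2 a b ha hb, pos_rt_iff hrn hb,
      pos_rt_iff hrn ((hπ.1 _).2 hb)] at h3
    have hne : a ≠ b := fun h => by subst h; omega
    have hb' := (rt_level hrn (a := a) (b := b) (by omega) hb ht).1 hβ.2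
    subst hb'
    exact ⟨a, by simp; omega, rfl⟩

/-! ### Lehmer codes and adjacent transpositions -/

theorem code_descent_iff (π : Equiv.Perm ℕ) (q : ℕ) :
    π (q + 1) < π q ↔ code π q + 1 ≤ code π (q + 1) := by
  constructor
  · intro h
    have : insert q ((Finset.range q).filter fun a => π q < π a) ⊆
        (Finset.range (q + 1)).filter fun a => π (q + 1) < π a := by
      intro a
      simp only [Finset.mem_insert, Finset.mem_filter, Finset.mem_range]
      rintro (rfl | h')
      · omega
      · omega
    have h2 := Finset.card_le_card this
    rwa [Finset.card_insert_of_notMem (by simp)] at h2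
  · intro h
    by_contra hn
    have hne : π q ≠ π (q + 1) := fun h' => by simpa using π.injective h'
    have : ((Finset.range (q + 1)).filter fun a => π (q + 1) < π a) ⊆
        (Finset.range q).filter fun a => π q < π a := by
      intro a
      simp only [Finset.mem_filter, Finset.mem_range]
      rintro ⟨h1, h2⟩
      have : a ≠ q := fun h' => by subst h'; omega
      omega
    have := Finset.card_le_card this
    unfold code at h
    omega

theorem code_mul_swap (π : Equiv.Perm ℕ) (q : ℕ) (h : π (q + 1) < π q) (k : ℕ) :
    code (π * Equiv.swap q (q + 1)) k =
      if k = q then code π (q + 1) - 1 else if k = q + 1 then code π q else code π k := by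
  have hlt : ∀ a, a < q → Equiv.swap q (q + 1) a = a := fun a ha =>
    Equiv.swap_apply_of_ne_of_ne (by omega) (by omega)
  have hgt : ∀ a, q + 1 < a → Equiv.swap q (q + 1) a = a := fun a ha =>
    Equiv.swap_apply_of_ne_of_ne (by omega) (by omega)
  split_ifs with h1 h2
  · subst h1
    have : ((Finset.range (k + 1)).filter fun a => π (k + 1) < π a) =
        insert k ((Finset.range k).filter fun a => π (k + 1) < π a) := by
      rw [Finset.range_add_one, Finset.filter_insert, if_pos h]
    unfold code
    rw [this, Finset.card_insert_of_notMem (by simp), Nat.add_sub_cancel]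
    congr 1
    refine Finset.filter_congr fun a ha => ?_
    rw [Equiv.Perm.mul_apply, Equiv.Perm.mul_apply, hlt a (by simpa using ha),
      Equiv.swap_apply_left]
  · subst h2
    unfold code
    rw [Finset.range_add_one, Finset.filter_insert, if_neg]
    · congr 1
      refine Finset.filter_congr fun a ha => ?_
      rw [Equiv.Perm.mul_apply, Equiv.Perm.mul_apply, hlt a (by simpa using ha),
        Equiv.swap_apply_right]
    · simp only [Equiv.Perm.mul_apply, Equiv.swap_apply_left, Equiv.swap_apply_right]
      omega
  · rcases Nat.lt_or_ge k q with hk | hk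
    · unfold code
      congr 1
      refine Finset.filter_congr fun a ha => ?_
      rw [Equiv.Perm.mul_apply, Equiv.Perm.mul_apply, hlt k hk, hlt a (by simp at ha; omega)]
    · unfold code
      refine Finset.card_bij (fun a _ => Equiv.swap q (q + 1) a) ?_ ?_ ?_
      · intro a ha
        simp only [Finset.mem_filter, Finset.mem_range, Equiv.Perm.mul_apply,
          hgt k (by omega)] at ha ⊢
        refine ⟨?_, ha.2⟩
        rw [Equiv.swap_apply_def]
        split_ifs <;> omega
      · intro a _ b _ hab
        exact (Equiv.swap q (q + 1)).injective hab
      · intro b hb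
        simp only [Finset.mem_filter, Finset.mem_range] at hb
        refine ⟨Equiv.swap q (q + 1) b, ?_, by simp⟩
        simp only [Finset.mem_filter, Finset.mem_range, Equiv.Perm.mul_apply,
          hgt k (by omega), Equiv.swap_apply_self]
        refine ⟨?_, hb.2⟩
        rw [Equiv.swap_apply_def]
        split_ifs <;> omega

/-! ### The elements `u_i^{(m)}` -/

theorem uElt_zero (m : ℕ) : c.uElt 0 m = 1 := by simp [uElt, uu]

theorem uElt_succ {i m : ℕ} (h : i + 1 ≤ m) :
    c.uElt (i + 1) m = c.sN (m - i - 1) * c.uElt i m := by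
  unfold uElt uu
  have e1 : m + 1 - (m - (i + 1) + 1) = i + 1 := by omega
  have e2 : m + 1 - (m - i + 1) = i := by omega
  have e3 : m - (i + 1) + 1 + 1 = m - i + 1 := by omega
  have e4 : m - (i + 1) + 1 - 1 = m - i - 1 := by omega
  rw [e1, e2, List.range'_succ, List.map_cons, List.prod_cons, e3, e4]

theorem sN_eq {t : ℕ} (h : t < n) : c.sN t = c.s ⟨t, h⟩ := dif_pos h

/-- The permutation of `u_i^{(m)}` sends `m` to `m - i` and fixes everything below `m - i`
(it is a cycle on `{m-i, …, m}`), and `u_i^{(m)}` has exactly `i` inversions, all of the form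
`ε_x - ε_m`. -/
theorem uElt_spec {r : ℕ} (hrn : r < n) (hA : c.PathA r) {m : ℕ} (hm : m ≤ r) {i : ℕ}
    (hi : i ≤ m) :
    c.uElt i m ∈ c.Wsub (deltaSet n r m) ∧
    (∃ π, c.IsPerm r (c.uElt i m) π ∧ π m = m - i ∧ ∀ x < m - i, π x = x) ∧
    (c.Inv (c.uElt i m)).card = i ∧ ∀ β ∈ c.Inv (c.uElt i m), ∃ x < m, β = rt n x m := by
  induction i with
  | zero =>
    rw [uElt_zero, Inv_one]
    exact ⟨one_mem _, ⟨1, IsPerm.one c r, rfl, fun _ _ => rfl⟩, rfl, by simp⟩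
  | succ i ih =>
    obtain ⟨hmem, ⟨π, h1, h2, h3⟩, h4, h5⟩ := ih (by omega)
    clear ih
    obtain ⟨q, hqv, hsq⟩ : ∃ q : Fin n, (q : ℕ) = m - i - 1 ∧ c.sN (m - i - 1) = c.s q :=
      ⟨⟨m - i - 1, by omega⟩, rfl, c.sN_eq _⟩
    rw [c.uElt_succ hi, hsq]
    set u := c.uElt i m
    have hinv : c.act u⁻¹ (c.sroot q) = rt n (m - i - 1) m := by
      apply c.act_inj u
      rw [act_act_inv, h1.2 _ _ (by omega) hm, h2, h3 _ (by omega), ← rt_succ, hqv]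
      congr 1
      omega
    have hpos : Pos (c.act u⁻¹ (c.sroot q)) := by
      rw [hinv, pos_rt_iff hrn hm]; omega
    refine ⟨mul_mem (Subgroup.subset_closure ⟨q, ?_, rfl⟩) hmem, ⟨_, IsPerm.mul c
      (IsPerm.simple c hrn hA q (by omega)) h1, ?_, ?_⟩, ?_, ?_⟩
    · exact_mod_cast (mem_deltaSet_self q hm).2 (by omega)
    · rw [Equiv.Perm.mul_apply, h2, hqv, show m - i - 1 + 1 = m - i by omega,
        Equiv.swap_apply_right]
      omega
    · intro x hx
      rw [Equiv.Perm.mul_apply, h3 x (by omega),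
        Equiv.swap_apply_of_ne_of_ne (by omega) (by omega)]
    · rw [c.card_Inv_s_mul hpos, h4]
    · rw [c.Inv_s_mul hpos, hinv]
      intro β hβ
      rcases Finset.mem_insert.1 hβ with h | h
      · exact ⟨_, by omega, h⟩
      · exact h5 β h

theorem len_uElt {r : ℕ} (hrn : r < n) (hA : c.PathA r) {m : ℕ} (hm : m ≤ r) {i : ℕ}
    (hi : i ≤ m) : c.len (c.uElt i m) = i := by
  rw [len_eq_card_Inv]; exact (c.uElt_spec hrn hA hm hi).2.2.1

/-- The graded inversion counts of `u_{i_r}^{(r)} ⋯ u_{i_1}^{(1)}` are `i_1, …, i_r`. -/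
theorem gr_of_uElt_prod {r : ℕ} (hrn : r < n) (hA : c.PathA r) {ii : ℕ → ℕ}
    (hbig : ∀ t, r < t → ii t = 0) (hle : ∀ t, t ≤ r → ii t ≤ t) :
    c.dprod (fun t => c.uElt (ii (t + 1)) (t + 1)) r ∈ c.Wsub (deltaSet n r r) ∧
    ∀ t < r + 1, (c.invLev r (c.dprod (fun t => c.uElt (ii (t + 1)) (t + 1)) r) t).card =
      ii (t + 1) := by
  set v : ℕ → c.W := fun t => c.uElt (ii (t + 1)) (t + 1) with hv
  have hlast : v r = 1 := by
    simp only [hv, hbig (r + 1) (by omega), uElt_zero]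
  have h1 : ∀ k < r + 1, v k ∈ c.Wsub (deltaSet n r (k + 1)) := by
    intro k hk
    rcases Nat.lt_succ_iff_lt_or_eq.1 hk with h | rfl
    · exact (c.uElt_spec hrn hA (m := k + 1) h (hle _ h)).1
    · rw [hlast]; exact one_mem _
  have h2 : ∀ k < r + 1, ∀ i ∈ deltaSet n r k, Pos (c.act (v k) (c.sroot i)) := by
    intro k hk i hi
    rcases Nat.lt_succ_iff_lt_or_eq.1 hk with h | rfl
    · rw [mem_deltaSet_self _ (by omega)] at hi
      by_contra hn
      obtain ⟨x, hx, he⟩ := (c.uElt_spec hrn hA (m := k + 1) h (hle _ h)).2.2.2 (c.sroot i)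
        ((c.mem_Inv).2 ⟨c.sroot_mem i, c.pos_sroot i, hn⟩)
      rw [← rt_succ] at he
      have := (rt_inj hrn (by omega) (by omega) hx h he).2
      omega
    · rw [hlast, c.act_one]; exact c.pos_sroot i
  have hd : c.dprod v (r + 1) = c.dprod v r := by rw [dprod, hlast, one_mul]
  refine ⟨c.dprod_mem h1 (by omega), fun t ht => ?_⟩
  rw [← hd, ← c.card_Inv_factor h1 h2 ht]
  rcases Nat.lt_succ_iff_lt_or_eq.1 ht with h | rfl
  · exact (c.uElt_spec hrn hA (m := t + 1) h (hle _ h)).2.2.1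
  · rw [hlast, Inv_one, hbig _ (by omega)]; rfl

/-! ### Products whose lengths add -/

theorem card_invLev_mono {r : ℕ} {x y : c.W} (h : c.Inv x ⊆ c.Inv y) (t : ℕ) :
    (c.invLev r x t).card ≤ (c.invLev r y t).card :=
  Finset.card_le_card (Finset.filter_subset_filter _ h)

/-- When lengths add, `gr` increases componentwise, by a total of the length of the left
factor. -/
theorem exists_gr_diff {r : ℕ} {x y : c.W} (hx : x ∈ c.Wsub (deltaSet n r r))
    (hy : y ∈ c.Wsub (deltaSet n r r)) (h : c.len (x * y) = c.len y + c.len x) :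
    ∃ p : Fin (r + 1) → ℕ, p ⟨r, by omega⟩ = 0 ∧ (∑ k, p k) = c.len x ∧
      ∀ t : Fin (r + 1), (c.invLev r (x * y) t).card = (c.invLev r y t).card + p t := by
  have hmono := c.card_invLev_mono (r := r) (c.Inv_subset_of_len h)
  have hp : ∀ t : Fin (r + 1), (c.invLev r (x * y) t).card = (c.invLev r y t).card +
      ((c.invLev r (x * y) t).card - (c.invLev r y t).card) := fun t => by
    have := hmono t
    omega
  refine ⟨fun t => (c.invLev r (x * y) t).card - (c.invLev r y t).card, ?_, ?_, hp⟩
  · simp only [c.invLev_last (mul_mem hx hy), Nat.zero_sub]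
  · have h1 := c.sum_card_invLev r (x * y)
    rw [Finset.sum_congr rfl fun t _ => hp t, Finset.sum_add_distrib, c.sum_card_invLev r y,
      h] at h1
    exact Nat.add_left_cancel h1

/-- When lengths add, left multiplication by `u_j^{(m)}` changes a single component of `gr`:
every new inversion is `ε_x - ε_b` with the same `b`, the preimage of `m` under the permutation
of `w`. -/
theorem exists_level_uElt {r : ℕ} (hrn : r < n) (hA : c.PathA r) {w : c.W}
    (hw : w ∈ c.Wsub (deltaSet n r r)) {j m : ℕ} (hj1 : 1 ≤ j) (hjm : j ≤ m) (hmr : m ≤ r)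
    (h : c.len (c.uElt j m * w) = j + c.len w) :
    ∃ k : Fin (r + 1), (k : ℕ) < r ∧ ∀ t : Fin (r + 1),
      (c.invLev r (c.uElt j m * w) t).card =
        (c.invLev r w t).card + if t = k then j else 0 := by
  obtain ⟨hu, -, hcard, hform⟩ := c.uElt_spec hrn hA hmr hjm
  have hu' := c.Wsub_mono (deltaSet_mono hmr (by omega)) hu
  have hlen := c.len_uElt hrn hA hmr hjm
  set u := c.uElt j m
  obtain ⟨p, hp0, hpsum, hp⟩ := c.exists_gr_diff hu' hw (by rw [h, hlen, add_comm])
  obtain ⟨π, hπ, -⟩ := c.exists_perm hrn hA hw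
  have hπ' := IsPerm.inv c hπ
  set b := π⁻¹ m with hb
  have hbr : b ≤ r := (hπ'.1 m).2 hmr
  have hnew : ∀ t : Fin (r + 1), (t : ℕ) + 1 ≠ b → p t = 0 := by
    intro t ht
    rcases Nat.lt_succ_iff_lt_or_eq.1 t.2 with htr | htr
    · have hsub : c.invLev r (u * w) t ⊆ c.invLev r w t := by
        intro β hβ
        rw [invLev, Finset.mem_filter] at hβ ⊢
        refine ⟨?_, hβ.2⟩
        rcases Finset.mem_union.1 (c.Inv_mul_subset u w hβ.1) with h' | h'
        · exact h'
        · exfalso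
          obtain ⟨γ, hγ, rfl⟩ := Finset.mem_image.1 h'
          obtain ⟨x, hx, rfl⟩ := hform γ hγ
          rw [hπ'.2 x m (by omega) hmr, ← hb] at hβ
          have hpos := ((c.mem_Inv).1 hβ.1).2.1
          rw [pos_rt_iff hrn hbr] at hpos
          have hne : π⁻¹ x ≠ b := fun h' => by
            have := π⁻¹.injective h'
            omega
          exact ht ((rt_level hrn (by omega) hbr htr).1 hβ.2).symm
      have := Finset.card_le_card hsub
      rw [hp t] at this
      omega
    · rwa [show (⟨r, by omega⟩ : Fin (r + 1)) = t from Fin.ext htr.symm] at hp0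
  have hb1 : 1 ≤ b := by
    by_contra hb0
    have : ∑ k, p k = 0 := Finset.sum_eq_zero fun t _ => hnew t (by omega)
    omega
  refine ⟨⟨b - 1, by omega⟩, by simp only; omega, fun t => ?_⟩
  rw [hp t]
  split_ifs with ht
  · subst ht
    rw [Finset.sum_eq_single ⟨b - 1, by omega⟩] at hpsum
    · rw [hpsum, hlen]
    · intro t _ ht
      refine hnew t fun h' => ht (Fin.ext ?_)
      simp only
      omega
    · simp
  · rw [hnew t fun h' => ht (Fin.ext (by simp only; omega))]

end Helpers

end RootSystemData

/-- Let `w = u_{i_r}^{(r)} ⋯ u_{i_1}^{(1)}` with `0 ≤ i_k ≤ k` (so `w ∈ W_{Δ_P}` and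
`gr(w) = Σ_{k=1}^r i_k e_k`), and let `1 ≤ j ≤ m ≤ r`.
(a) If `ℓ(u_j^{(m)} w) = j + ℓ(w)` then `gr(u_j^{(m)} w) = gr(w) + j·e_k` for a
unique `1 ≤ k ≤ r`.
(b) If `ℓ(s_j w) = ℓ(w) - 1` then `gr(s_j w) = gr(w) - e_k` for a unique `1 ≤ k ≤ r`.
(c) `ℓ(w s_j) = ℓ(w) - 1` iff `i_j ≥ i_{j-1} + 1` (with `i_0 := 0`), in which case
`gr(w s_j)` is obtained from `gr(w)` by replacing the `(j-1)`-st component by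
`i_j - 1` and the `j`-th component by `i_{j-1}`.
(d) If `w' ∈ W_{Δ_P}` satisfies `ℓ(w'w) = ℓ(w) ± ℓ(w')` then there are nonnegative
integers `p_1, …, p_r` with `Σ p_k = ℓ(w')` and `gr(w'w) = gr(w) ± Σ p_k e_k`. -/
theorem gr_of_products_in_WP {n : ℕ} (c : RootSystemData n)
    (r : ℕ) (hr1 : 1 ≤ r) (hrn : r < n) (hA : c.PathA r)
    (ii : ℕ → ℕ) (hii0 : ii 0 = 0) (hii_big : ∀ t, r < t → ii t = 0)
    (hii_le : ∀ t, t ≤ r → ii t ≤ t)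
    (w : c.W)
    (hw : w = (List.ofFn fun t : Fin r =>
      c.uElt (ii ((t : ℕ) + 1)) ((t : ℕ) + 1)).reverse.prod)
    (j m : ℕ) (hj1 : 1 ≤ j) (hjm : j ≤ m) (hmr : m ≤ r) :
    w ∈ c.Wsub (deltaSet n r r) ∧
    (∀ v : Fin (r + 1) → c.W, c.IsDecomp r w v →
      ∀ t : Fin (r + 1), c.len (v t) = ii ((t : ℕ) + 1)) ∧
    (c.len (c.uElt j m * w) = j + c.len w →
      ∀ v' : Fin (r + 1) → c.W, c.IsDecomp r (c.uElt j m * w) v' →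
        ∃! k : Fin (r + 1), (k : ℕ) < r ∧
          ∀ t : Fin (r + 1),
            (c.len (v' t) : ℤ) = (ii ((t : ℕ) + 1) : ℤ) + if t = k then (j : ℤ) else 0) ∧
    (c.len (c.sN (j - 1) * w) + 1 = c.len w →
      ∀ v' : Fin (r + 1) → c.W, c.IsDecomp r (c.sN (j - 1) * w) v' →
        ∃! k : Fin (r + 1), (k : ℕ) < r ∧
          ∀ t : Fin (r + 1),
            (c.len (v' t) : ℤ) = (ii ((t : ℕ) + 1) : ℤ) - if t = k then 1 else 0) ∧
    ((c.len (w * c.sN (j - 1)) + 1 = c.len w ↔ ii (j - 1) + 1 ≤ ii j) ∧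
      (c.len (w * c.sN (j - 1)) + 1 = c.len w →
        ∀ v' : Fin (r + 1) → c.W, c.IsDecomp r (w * c.sN (j - 1)) v' →
          ∀ t : Fin (r + 1),
            c.len (v' t) =
              if (t : ℕ) + 1 = j - 1 then ii j - 1
              else if (t : ℕ) + 1 = j then ii (j - 1)
              else ii ((t : ℕ) + 1))) ∧
    (∀ w' ∈ c.Wsub (deltaSet n r r),
      (c.len (w' * w) = c.len w + c.len w' →
        ∃ p : Fin (r + 1) → ℕ, p ⟨r, by omega⟩ = 0 ∧ (∑ k, p k) = c.len w' ∧
          ∀ v' : Fin (r + 1) → c.W, c.IsDecomp r (w' * w) v' →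
            ∀ t : Fin (r + 1), c.len (v' t) = ii ((t : ℕ) + 1) + p t) ∧
      (c.len (w' * w) + c.len w' = c.len w →
        ∃ p : Fin (r + 1) → ℕ, p ⟨r, by omega⟩ = 0 ∧ (∑ k, p k) = c.len w' ∧
          ∀ v' : Fin (r + 1) → c.W, c.IsDecomp r (w' * w) v' →
            ∀ t : Fin (r + 1), c.len (v' t) + p t = ii ((t : ℕ) + 1))) := by
  have hwd : w = c.dprod (fun t => c.uElt (ii (t + 1)) (t + 1)) r := by
    rw [hw, ← c.ofFn_reverse_prod]
  obtain ⟨hwP, hgr⟩ := c.gr_of_uElt_prod hrn hA hii_big hii_le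
  rw [← hwd] at hwP hgr
  have hgr' : ∀ t : Fin (r + 1), (c.invLev r w t).card = ii ((t : ℕ) + 1) :=
    fun t => hgr t t.2
  obtain ⟨q, hqv, hsq⟩ : ∃ q : Fin n, (q : ℕ) = j - 1 ∧ c.sN (j - 1) = c.s q :=
    ⟨⟨j - 1, by omega⟩, rfl, c.sN_eq _⟩
  have hsP : c.s q ∈ c.Wsub (deltaSet n r r) :=
    Subgroup.subset_closure
      ⟨q, by exact_mod_cast (RootSystemData.mem_deltaSet_self q le_rfl).2 (by omega), rfl⟩
  have hdec : ∀ w' ∈ c.Wsub (deltaSet n r r), c.len (w' * w) + c.len w' = c.len w →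
      ∃ p : Fin (r + 1) → ℕ, p ⟨r, by omega⟩ = 0 ∧ (∑ k, p k) = c.len w' ∧
        ∀ t : Fin (r + 1), (c.invLev r (w' * w) t).card + p t = ii ((t : ℕ) + 1) := by
    intro w' hw' hlen
    have hlen' : c.len (w'⁻¹ * (w' * w)) = c.len (w' * w) + c.len w'⁻¹ := by
      rw [inv_mul_cancel_left, c.len_inv, hlen]
    obtain ⟨p, h0, h1, h2⟩ := c.exists_gr_diff (inv_mem hw') (mul_mem hw' hwP) hlen'
    refine ⟨p, h0, by rw [h1, c.len_inv], fun t => ?_⟩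
    rw [← hgr' t, ← h2 t, inv_mul_cancel_left]
  refine ⟨hwP, fun v hv t => ?_, fun h v' hv' => ?_, fun h v' hv' => ?_, ?_, ?_⟩
  · rw [RootSystemData.IsDecomp.len_eq c hv, hgr']
  · obtain ⟨k, hk, hkt⟩ := c.exists_level_uElt hrn hA hwP hj1 hjm hmr h
    refine ⟨k, ⟨hk, fun t => ?_⟩, fun k' hk' => ?_⟩
    · rw [RootSystemData.IsDecomp.len_eq c hv', hkt t, hgr']
      split_ifs <;> simp
    · have h1 := hk'.2 k'
      rw [RootSystemData.IsDecomp.len_eq c hv', hkt k', hgr', if_pos rfl] at h1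
      by_contra hne
      rw [if_neg hne] at h1
      push_cast at h1
      omega
  · have hs1 : c.len (c.s q) = 1 := by
      rw [← hsq]
      have h1 := c.uElt_succ (i := 0) (m := j) hj1
      rw [c.uElt_zero, mul_one, Nat.sub_zero] at h1
      rw [← h1]
      exact c.len_uElt hrn hA (by omega) hj1
    rw [hsq] at h hv'
    obtain ⟨p, h0, h1, h2⟩ := hdec (c.s q) hsP (by rw [hs1, h])
    rw [hs1] at h1
    -- Nonnegative integers with sum `1`: exactly one of them is `1`.
    obtain ⟨k, -, hk⟩ : ∃ k ∈ Finset.univ, p k ≠ 0 := by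
      by_contra hall
      push Not at hall
      rw [Finset.sum_eq_zero hall] at h1
      omega
    have hsplit := Finset.add_sum_erase Finset.univ p (Finset.mem_univ k)
    have hpk : p k = 1 := by omega
    have hp0 : ∀ t, t ≠ k → p t = 0 := fun t ht =>
      Finset.sum_eq_zero_iff.1 (show ∑ x ∈ Finset.univ.erase k, p x = 0 by omega) t
        (Finset.mem_erase.2 ⟨ht, Finset.mem_univ t⟩)
    have hkt : ∀ t, (c.len (v' t) : ℤ) = (ii ((t : ℕ) + 1) : ℤ) - if t = k then 1 else 0 := by
      intro t
      rw [RootSystemData.IsDecomp.len_eq c hv', ← h2 t]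
      split_ifs with ht
      · subst ht; rw [hpk]; push_cast; ring
      · rw [hp0 t ht]; simp
    refine ⟨k, ⟨?_, hkt⟩, fun k' hk' => ?_⟩
    · by_contra hkr
      have hk' : (⟨r, by omega⟩ : Fin (r + 1)) = k := Fin.ext (by have := k.2; simp only; omega)
      rw [hk'] at h0
      exact hk h0
    · have h3 := hk'.2 k'
      rw [hkt k', if_pos rfl] at h3
      by_contra hne
      rw [if_neg hne] at h3
      omega
  · obtain ⟨π, hπ, -⟩ := c.exists_perm hrn hA hwP
    have hcode : ∀ k ≤ r, RootSystemData.code π k = ii k := by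
      intro k hk
      rcases k with _ | k
      · rw [hii0]; rfl
      · rw [← c.card_invLev_eq_code hrn hA hwP hπ (by omega), hgr k (by omega)]
    -- Both sides of the equivalence say that the permutation of `w` has a descent at `j - 1`.
    have hdesc : c.len (w * c.s q) + 1 = c.len w ↔ π (q + 1) < π q := by
      have hpos : RootSystemData.Pos (c.act w (c.sroot q)) ↔ π q ≤ π (q + 1) := by
        rw [← c.rt_succ, hπ.2 _ _ (by omega) (by omega),
          RootSystemData.pos_rt_iff hrn ((hπ.1 _).2 (by omega))]
      by_cases h : RootSystemData.Pos (c.act w (c.sroot q))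
      · have h1 := c.len_mul_s_of_pos h
        rw [hpos] at h
        omega
      · have h1 := c.len_mul_s_of_not_pos h
        rw [hpos] at h
        omega
    have hq1 : (q : ℕ) + 1 = j := by omega
    rw [hsq]
    constructor
    · rw [hdesc, RootSystemData.code_descent_iff, hcode _ (by omega), hcode _ (by omega), hq1, hqv]
    · intro h v' hv' t
      rw [hdesc] at h
      rw [RootSystemData.IsDecomp.len_eq c hv']
      rcases Nat.lt_succ_iff_lt_or_eq.1 t.2 with ht | ht
      · rw [c.card_invLev_eq_code hrn hA (mul_mem hwP hsP)
          (RootSystemData.IsPerm.mul c hπ (RootSystemData.IsPerm.simple c hrn hA q (by omega))) ht,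
          RootSystemData.code_mul_swap π q h, hcode _ (by omega), hcode _ (by omega),
          hcode _ (by omega), hq1, hqv]
      · rw [ht, c.invLev_last (mul_mem hwP hsP), if_neg (by omega), if_neg (by omega),
          hii_big _ (by omega)]
  · intro w' hw'
    constructor
    · intro h
      obtain ⟨p, h0, h1, h2⟩ := c.exists_gr_diff hw' hwP h
      refine ⟨p, h0, h1, fun v' hv' t => ?_⟩
      rw [RootSystemData.IsDecomp.len_eq c hv', h2 t, hgr' t]
    · intro h
      obtain ⟨p, h0, h1, h2⟩ := hdec w' hw' h
      refine ⟨p, h0, h1, fun v' hv' t => ?_⟩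
      rw [RootSystemData.IsDecomp.len_eq c hv', h2 t]
end
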